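/- arXiv:2409.19500 — 2 statements merged into one kernel-verified Lean document; each statement's English description precedes it below -/
import Mathlib

section
/- The invariant subalgebra K(2)^{D₆} has Hilbert–Poincaré series t⁴ + 2s¹⁰t³ + 2s²t³ + 3s¹²t² + s⁸t² + s⁴t² + t² + 2s¹⁰t + 2s²t + 1; that is, its bigraded components have dimensions: (0,0):1, (2,1):2, (10,1):2, (0,2):1, (4,2):1, (8,2):1, (12,2):3, (2,3):2, (10,3):2, (0,4):1, and all other bigraded components are zero. -/
/-!
Since `w = -x - y`, the algebra `A` is `ℚ[x, y] / (x² + xy + y², x⁶)`. In polynomial degree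
`1 ≤ d ≤ 5` it has the basis `x^d, x^(d-1) y`, in degree `0` the basis `1` and in degree `6` the
basis `x⁵y`. As representations of `S₃ = ⟨a², b⟩`, writing `V` for the two-dimensional irreducible
one,

* `A_0` is trivial and `A_6` is the sign representation,
* `A_d ≅ V` for `d = 1, 2, 4, 5`, where `x^d + y^d + w^d = 0`,
* `A_3` is the sum of the trivial and the sign representation.

The exterior algebra `E(2)` of `V ⊕ V` contains the trivial, the sign and the standard
representation with multiplicities `1, 0, 0`; `0, 0, 2`; `1, 3, 1`; `0, 0, 2`; `1, 0, 0` in degrees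
`q = 0, …, 4`. The central element `a³` acts on `A_d ⊗ E(2)_q` by `(-1)^(d+q)`, so nothing survives
if `d + q` is odd; otherwise, the irreducible representations of `S₃` being self-dual, the dimension
of the invariants is `∑_ρ m_ρ(A_d) m_ρ(E(2)_q)`. Note that for `d = 3` only odd `q` matter, where
neither the trivial nor the sign representation occurs in `E(2)`.

Multiplicities are realised concretely: `TS ε q` and `TV q` are the subspaces of `E(2)_q` consisting
of the possible coefficients `w` in an invariant `e ⊗ w` (`finrank_single`) or
`e₀ ⊗ w + e₁ ⊗ σ w` (`finrank_pair`). Linear independence of the monomials in `E(2)` comes from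
contractions, and that of `x^d, x^(d-1) y` in `A` from a map to a quadratic algebra over `ℚ[t]`.
-/

set_option synthInstance.maxHeartbeats 1000000
set_option maxHeartbeats 1000000

open MvPolynomial
open scoped TensorProduct

noncomputable section

abbrev P3 : Type := MvPolynomial (Fin 3) ℚ

def Jid : Ideal P3 :=
  Ideal.span {X 0 + X 1 + X 2, X 0 ^ 2 + X 1 ^ 2 + X 2 ^ 2, X 0 ^ 6 + X 1 ^ 6 + X 2 ^ 6}

abbrev Aq : Type := P3 ⧸ Jid

def mkA : P3 →ₐ[ℚ] Aq := Ideal.Quotient.mkₐ ℚ Jid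

lemma rename_sum_pow (σ : Equiv.Perm (Fin 3)) (k : ℕ) :
    rename σ ((X 0 : P3) ^ k + X 1 ^ k + X 2 ^ k) = (X 0 : P3) ^ k + X 1 ^ k + X 2 ^ k := by
  have h : ((X 0 : P3) ^ k + X 1 ^ k + X 2 ^ k) = ∑ i, (X i : P3) ^ k := by
    simp [Fin.sum_univ_three]
  rw [h, map_sum]
  simp only [map_pow, rename_X]
  exact Fintype.sum_equiv σ _ _ fun i => rfl

lemma rename_mem_J (σ : Equiv.Perm (Fin 3)) {p : P3} (hp : p ∈ Jid) :
    rename σ p ∈ Jid := by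
  have hle : Jid.map (rename σ : P3 →ₐ[ℚ] P3).toRingHom ≤ Jid := by
    rw [Jid, Ideal.map_span, Ideal.span_le]
    rintro q ⟨r, hr, rfl⟩
    simp only [Set.mem_insert_iff, Set.mem_singleton_iff] at hr
    have h1 := rename_sum_pow σ 1
    simp only [pow_one] at h1
    rcases hr with rfl | rfl | rfl
    · exact Ideal.subset_span (by simp only [AlgHom.toRingHom_eq_coe, RingHom.coe_coe, h1]; left; rfl)
    · exact Ideal.subset_span (by
        simp only [AlgHom.toRingHom_eq_coe, RingHom.coe_coe, rename_sum_pow σ 2]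
        right; left; rfl)
    · exact Ideal.subset_span (by
        simp only [AlgHom.toRingHom_eq_coe, RingHom.coe_coe, rename_sum_pow σ 6]
        right; right; rfl)
  exact hle (Ideal.mem_map_of_mem _ hp)

def permAq (σ : Equiv.Perm (Fin 3)) : Aq →ₐ[ℚ] Aq :=
  Ideal.Quotient.liftₐ Jid (mkA.comp (rename σ)) (fun p hp => by
    simp only [AlgHom.comp_apply, mkA, Ideal.Quotient.mkₐ_eq_mk]
    exact Ideal.Quotient.eq_zero_iff_mem.mpr (rename_mem_J σ hp))

def negP : P3 →ₐ[ℚ] P3 := aeval (fun i => -X i)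

lemma negP_mem_J {p : P3} (hp : p ∈ Jid) : negP p ∈ Jid := by
  have hle : Jid.map negP.toRingHom ≤ Jid := by
    rw [Jid, Ideal.map_span, Ideal.span_le]
    rintro q ⟨r, hr, rfl⟩
    simp only [Set.mem_insert_iff, Set.mem_singleton_iff] at hr
    rcases hr with rfl | rfl | rfl
    · have : negP ((X 0 : P3) + X 1 + X 2) = -(X 0 + X 1 + X 2) := by
        simp [negP]; try ring
      simp only [AlgHom.toRingHom_eq_coe, RingHom.coe_coe, this]
      exact neg_mem (Ideal.subset_span (by left; rfl))
    · have : negP ((X 0 : P3) ^ 2 + X 1 ^ 2 + X 2 ^ 2) = X 0 ^ 2 + X 1 ^ 2 + X 2 ^ 2 := by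
        simp [negP]; try ring
      simp only [AlgHom.toRingHom_eq_coe, RingHom.coe_coe, this]
      exact Ideal.subset_span (by right; left; rfl)
    · have : negP ((X 0 : P3) ^ 6 + X 1 ^ 6 + X 2 ^ 6) = X 0 ^ 6 + X 1 ^ 6 + X 2 ^ 6 := by
        simp [negP]; try ring
      simp only [AlgHom.toRingHom_eq_coe, RingHom.coe_coe, this]
      exact Ideal.subset_span (by right; right; rfl)
  exact hle (Ideal.mem_map_of_mem _ hp)

def negAq : Aq →ₐ[ℚ] Aq :=
  Ideal.Quotient.liftₐ Jid (mkA.comp negP) (fun p hp => by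
    simp only [AlgHom.comp_apply, mkA, Ideal.Quotient.mkₐ_eq_mk]
    exact Ideal.Quotient.eq_zero_iff_mem.mpr (negP_mem_J hp))

def Vsub : Submodule ℚ (Fin 3 → ℚ) := Submodule.span ℚ {fun _ => (1 : ℚ)}

abbrev Vq : Type := (Fin 3 → ℚ) ⧸ Vsub

def vGen (i : Fin 3) : Vq := Submodule.Quotient.mk (Pi.single i 1)

abbrev Em (m : ℕ) : Type := ExteriorAlgebra ℚ (Fin m → Vq)

def eGen (m : ℕ) (j : Fin m) (i : Fin 3) : Em m :=
  ExteriorAlgebra.ι ℚ (Pi.single j (vGen i))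

def prodGen (m : ℕ) (i : Fin 3) (I : Finset (Fin m)) : Em m :=
  ((I.sort (· ≤ ·)).map (fun j => eGen m j i)).prod

def extHom {m : ℕ} (g : (Fin m → Vq) →ₗ[ℚ] (Fin m → Vq)) : Em m →ₐ[ℚ] Em m :=
  ExteriorAlgebra.lift ℚ ⟨(ExteriorAlgebra.ι ℚ).comp g, fun v => by
    simpa using ExteriorAlgebra.ι_sq_zero (g v)⟩

def permV (σ : Equiv.Perm (Fin 3)) : Vq →ₗ[ℚ] Vq :=
  Submodule.mapQ Vsub Vsub (LinearMap.funLeft ℚ ℚ ⇑σ⁻¹) (by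
    rw [Vsub, Submodule.span_le]
    rintro v rfl
    exact Submodule.mem_comap.mpr (Submodule.subset_span rfl))

abbrev Kk (m : ℕ) : Type := Aq ⊗[ℚ] Em m

def zz (m : ℕ) (d : ℕ) (I : Finset (Fin m)) : Kk m :=
  mkA (X 0 ^ d) ⊗ₜ[ℚ] prodGen m 0 I + mkA (X 1 ^ d) ⊗ₜ[ℚ] prodGen m 1 I +
    mkA (X 2 ^ d) ⊗ₜ[ℚ] prodGen m 2 I

def zS (m : ℕ) (i : ℕ) (I : Finset (Fin m)) : Kk m := zz m (i - 1) I

/-- The algebra endomorphism of `K(m)` given by the element of `S₃ ⊆ D₆` corresponding to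
the permutation `σ`: it simultaneously permutes `(x,y,w)` and each triple `(α_j,β_j,γ_j)`. -/
def permK (m : ℕ) (σ : Equiv.Perm (Fin 3)) : Kk m →ₐ[ℚ] Kk m :=
  Algebra.TensorProduct.map (permAq σ) (extHom (LinearMap.compLeft (permV σ) (Fin m)))

/-- The algebra endomorphism of `K(m)` given by the central element `a³` of `D₆`: it
multiplies each of `x, y, w, α_j, β_j, γ_j` by `−1`. -/
def negK (m : ℕ) : Kk m →ₐ[ℚ] Kk m :=
  Algebra.TensorProduct.map negAq (extHom (-LinearMap.id))

/-- The set of `D₆`-invariants of `K(m)`: since `D₆` is generated by the subgroup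
`⟨a²,b⟩ ≅ S₃` together with the central element `a³`, these are the elements fixed by all
the simultaneous permutations and by the sign automorphism. -/
def invD6 (m : ℕ) : Set (Kk m) :=
  {z | (∀ σ : Equiv.Perm (Fin 3), permK m σ z = z) ∧ negK m z = z}

/-- The set of `S₃`-invariants of `K(m)`, for the subgroup `⟨a²,b⟩ ≅ S₃` of `D₆`. -/
def invS3 (m : ℕ) : Set (Kk m) :=
  {z | ∀ σ : Equiv.Perm (Fin 3), permK m σ z = z}

/-- The bidegree-`(p,q)` component of the bigraded algebra `K(m)` (with `x, y, w` of
bidegree `(2,0)` and each `α_j, β_j, γ_j` of bidegree `(0,1)`): the ℚ-span of the images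
of the bihomogeneous monomials of bidegree `(p,q)`. -/
def component (m p q : ℕ) : Submodule ℚ (Kk m) :=
  Submodule.span ℚ {z : Kk m | ∃ (a b c : ℕ) (l : List (Fin m × Fin 3)),
    2 * (a + b + c) = p ∧ l.length = q ∧
    z = mkA (X 0 ^ a * X 1 ^ b * X 2 ^ c) ⊗ₜ[ℚ] (l.map fun pr => eGen m pr.1 pr.2).prod}

/-- The `D₆`-invariants of `K(m)`, as a ℚ-submodule. -/
def invD6Submodule (m : ℕ) : Submodule ℚ (Kk m) where
  carrier := invD6 m
  add_mem' := by
    rintro a b ⟨ha1, ha2⟩ ⟨hb1, hb2⟩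
    exact ⟨fun σ => by rw [map_add, ha1 σ, hb1 σ], by rw [map_add, ha2, hb2]⟩
  zero_mem' := ⟨fun σ => map_zero _, map_zero _⟩
  smul_mem' := by
    rintro c a ⟨h1, h2⟩
    exact ⟨fun σ => by rw [map_smul, h1 σ], by rw [map_smul, h2]⟩

set_option linter.unusedSimpArgs false

/-! ### The exterior algebra -/

/-- The first basis vector `α_1` of `E(2)`. -/
def A0 : Em 2 := eGen 2 0 0
/-- The second basis vector `β_1` of `E(2)`; note `γ_1 = -α_1 - β_1`. -/
def A1 : Em 2 := eGen 2 0 1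
/-- The third basis vector `α_2` of `E(2)`. -/
def B0 : Em 2 := eGen 2 1 0
/-- The fourth basis vector `β_2` of `E(2)`; note `γ_2 = -α_2 - β_2`. -/
def B1 : Em 2 := eGen 2 1 1

lemma eGen_two (j : Fin 2) : eGen 2 j 2 = -eGen 2 j 0 - eGen 2 j 1 := by
  have h : vGen 2 = -vGen 0 - vGen 1 := by
    have : (Submodule.Quotient.mk (fun _ => 1) : Vq) = 0 :=
      (Submodule.Quotient.mk_eq_zero Vsub).mpr (Submodule.subset_span rfl)
    rw [← sub_eq_zero, ← this]
    simp only [vGen, ← Submodule.Quotient.mk_neg, ← Submodule.Quotient.mk_sub]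
    congr 1
    ext i
    fin_cases i <;> simp
  simp only [eGen, h, Pi.single_sub, Pi.single_neg, map_sub, map_neg]

lemma eGen_cases (j : Fin 2) (i : Fin 3) : eGen 2 j i ∈ Submodule.span ℚ {A0, A1, B0, B1} := by
  have hA0 : A0 ∈ Submodule.span ℚ {A0, A1, B0, B1} := Submodule.subset_span (by simp)
  have hA1 : A1 ∈ Submodule.span ℚ {A0, A1, B0, B1} := Submodule.subset_span (by simp)
  have hB0 : B0 ∈ Submodule.span ℚ {A0, A1, B0, B1} := Submodule.subset_span (by simp)
  have hB1 : B1 ∈ Submodule.span ℚ {A0, A1, B0, B1} := Submodule.subset_span (by simp)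
  fin_cases j <;> fin_cases i
  · exact hA0
  · exact hA1
  · exact (eGen_two 0).symm ▸ sub_mem (neg_mem hA0) hA1
  · exact hB0
  · exact hB1
  · exact (eGen_two 1).symm ▸ sub_mem (neg_mem hB0) hB1

lemma eGen_sq (j : Fin 2) (i : Fin 3) : eGen 2 j i * eGen 2 j i = 0 :=
  ExteriorAlgebra.ι_sq_zero _

lemma eGen_swap (j j' : Fin 2) (i i' : Fin 3) :
    eGen 2 j i * eGen 2 j' i' = -(eGen 2 j' i' * eGen 2 j i) :=
  eq_neg_of_add_eq_zero_left (ExteriorAlgebra.ι_add_mul_swap _ _)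

lemma sqA0 : A0 * A0 = 0 := eGen_sq _ _
lemma sqA1 : A1 * A1 = 0 := eGen_sq _ _
lemma sqB0 : B0 * B0 = 0 := eGen_sq _ _
lemma sqB1 : B1 * B1 = 0 := eGen_sq _ _
lemma sqA0' (z : Em 2) : A0 * (A0 * z) = 0 := by rw [← mul_assoc, sqA0, zero_mul]
lemma sqA1' (z : Em 2) : A1 * (A1 * z) = 0 := by rw [← mul_assoc, sqA1, zero_mul]
lemma sqB0' (z : Em 2) : B0 * (B0 * z) = 0 := by rw [← mul_assoc, sqB0, zero_mul]
lemma sqB1' (z : Em 2) : B1 * (B1 * z) = 0 := by rw [← mul_assoc, sqB1, zero_mul]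
lemma swA1A0 : A1 * A0 = -(A0 * A1) := eGen_swap _ _ _ _
lemma swB0A0 : B0 * A0 = -(A0 * B0) := eGen_swap _ _ _ _
lemma swB1A0 : B1 * A0 = -(A0 * B1) := eGen_swap _ _ _ _
lemma swB0A1 : B0 * A1 = -(A1 * B0) := eGen_swap _ _ _ _
lemma swB1A1 : B1 * A1 = -(A1 * B1) := eGen_swap _ _ _ _
lemma swB1B0 : B1 * B0 = -(B0 * B1) := eGen_swap _ _ _ _
lemma swA1A0' (z : Em 2) : A1 * (A0 * z) = -(A0 * (A1 * z)) := by
  rw [← mul_assoc, swA1A0, neg_mul, mul_assoc]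
lemma swB0A0' (z : Em 2) : B0 * (A0 * z) = -(A0 * (B0 * z)) := by
  rw [← mul_assoc, swB0A0, neg_mul, mul_assoc]
lemma swB1A0' (z : Em 2) : B1 * (A0 * z) = -(A0 * (B1 * z)) := by
  rw [← mul_assoc, swB1A0, neg_mul, mul_assoc]
lemma swB0A1' (z : Em 2) : B0 * (A1 * z) = -(A1 * (B0 * z)) := by
  rw [← mul_assoc, swB0A1, neg_mul, mul_assoc]
lemma swB1A1' (z : Em 2) : B1 * (A1 * z) = -(A1 * (B1 * z)) := by
  rw [← mul_assoc, swB1A1, neg_mul, mul_assoc]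
lemma swB1B0' (z : Em 2) : B1 * (B0 * z) = -(B0 * (B1 * z)) := by
  rw [← mul_assoc, swB1B0, neg_mul, mul_assoc]

/-- The degree-`q` part of `E(2)`: the span of the products of `q` generators. -/
def G (q : ℕ) : Submodule ℚ (Em 2) :=
  Submodule.span ℚ {w | ∃ l : List (Fin 2 × Fin 3), l.length = q ∧
    w = (l.map fun pr => eGen 2 pr.1 pr.2).prod}

lemma one_mem_G : (1 : Em 2) ∈ G 0 := Submodule.subset_span ⟨[], rfl, by simp⟩

lemma mul_mem_G (j : Fin 2) (i : Fin 3) {q : ℕ} {w : Em 2} (hw : w ∈ G q) :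
    eGen 2 j i * w ∈ G (q + 1) := by
  induction hw using Submodule.span_induction with
  | mem x hx =>
    obtain ⟨l, hl, rfl⟩ := hx
    exact Submodule.subset_span ⟨(j, i) :: l, by simp [hl], by simp⟩
  | zero => simp
  | add x y _ _ hx hy => rw [mul_add]; exact add_mem hx hy
  | smul c x _ hx => rw [mul_smul_comm]; exact Submodule.smul_mem _ _ hx

lemma A0_mul_mem {q : ℕ} {w : Em 2} (hw : w ∈ G q) : A0 * w ∈ G (q + 1) := mul_mem_G _ _ hw
lemma A1_mul_mem {q : ℕ} {w : Em 2} (hw : w ∈ G q) : A1 * w ∈ G (q + 1) := mul_mem_G _ _ hw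
lemma B0_mul_mem {q : ℕ} {w : Em 2} (hw : w ∈ G q) : B0 * w ∈ G (q + 1) := mul_mem_G _ _ hw
lemma B1_mul_mem {q : ℕ} {w : Em 2} (hw : w ∈ G q) : B1 * w ∈ G (q + 1) := mul_mem_G _ _ hw
lemma A0_mem : A0 ∈ G 1 := by simpa using A0_mul_mem one_mem_G
lemma A1_mem : A1 ∈ G 1 := by simpa using A1_mul_mem one_mem_G
lemma B0_mem : B0 ∈ G 1 := by simpa using B0_mul_mem one_mem_G
lemma B1_mem : B1 ∈ G 1 := by simpa using B1_mul_mem one_mem_G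

/-- Spanning sets of consecutive degrees are found by multiplying with the four basis vectors. -/
lemma G_succ_le {q : ℕ} {s : Set (Em 2)} {T : Submodule ℚ (Em 2)}
    (hG : G q ≤ Submodule.span ℚ s)
    (h : ∀ x ∈ s, A0 * x ∈ T ∧ A1 * x ∈ T ∧ B0 * x ∈ T ∧ B1 * x ∈ T) : G (q + 1) ≤ T := by
  have key : ∀ g ∈ Submodule.span ℚ {A0, A1, B0, B1}, ∀ x ∈ Submodule.span ℚ s, g * x ∈ T := by
    intro g hg x hx
    have : g * x ∈ Submodule.span ℚ {A0, A1, B0, B1} * Submodule.span ℚ s :=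
      Submodule.mul_mem_mul hg hx
    rw [Submodule.span_mul_span] at this
    refine Submodule.span_le.mpr ?_ this
    rintro _ ⟨a, ha, b, hb, rfl⟩
    obtain ⟨h1, h2, h3, h4⟩ := h b hb
    simp only [Set.mem_insert_iff, Set.mem_singleton_iff] at ha
    rcases ha with rfl | rfl | rfl | rfl <;> assumption
  refine Submodule.span_le.mpr ?_
  rintro _ ⟨l, hl, rfl⟩
  cases l with
  | nil => simp at hl
  | cons pr l =>
    rw [List.map_cons, List.prod_cons]
    exact key _ (eGen_cases _ _) _ (hG (Submodule.subset_span ⟨l, by simpa using hl, rfl⟩))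

lemma G0_le : G 0 ≤ Submodule.span ℚ {1} := by
  refine Submodule.span_le.mpr ?_
  rintro _ ⟨l, hl, rfl⟩
  rw [List.length_eq_zero_iff.mp hl]
  exact Submodule.subset_span (by simp)

lemma G1_le : G 1 ≤ Submodule.span ℚ {A0, A1, B0, B1} := by
  refine G_succ_le G0_le ?_
  rintro x rfl
  refine ⟨?_, ?_, ?_, ?_⟩ <;> exact Submodule.subset_span (by simp)

lemma G2_le : G 2 ≤ Submodule.span ℚ
    {A0 * A1, A0 * B0, A0 * B1, A1 * B0, A1 * B1, B0 * B1} := by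
  refine G_succ_le G1_le ?_
  rintro x (rfl | rfl | rfl | rfl) <;> refine ⟨?_, ?_, ?_, ?_⟩ <;>
  try simp only [sqA0, sqA1, sqB0, sqB1, swA1A0, swB0A0, swB1A0, swB0A1, swB1A1, swB1B0,
    neg_mem_iff, zero_mem]
  all_goals exact Submodule.subset_span (by simp)

lemma G3_le : G 3 ≤ Submodule.span ℚ
    {A0 * (A1 * B0), A0 * (A1 * B1), A0 * (B0 * B1), A1 * (B0 * B1)} := by
  refine G_succ_le G2_le ?_
  rintro x (rfl | rfl | rfl | rfl | rfl | rfl) <;> refine ⟨?_, ?_, ?_, ?_⟩ <;>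
  try simp only [sqA0, sqA1, sqB0, sqB1, swA1A0, swB0A0, swB1A0, swB0A1, swB1A1, swB1B0,
    sqA0', sqA1', sqB0', sqB1', swA1A0', swB0A0', swB1A0', swB0A1', swB1A1', swB1B0',
    mul_neg, mul_zero, neg_zero, neg_mem_iff, zero_mem]
  all_goals exact Submodule.subset_span (by simp)

lemma G4_le : G 4 ≤ Submodule.span ℚ {A0 * (A1 * (B0 * B1))} := by
  refine G_succ_le G3_le ?_
  rintro x (rfl | rfl | rfl | rfl) <;> refine ⟨?_, ?_, ?_, ?_⟩ <;>
  try simp only [sqA0, sqA1, sqB0, sqB1, swA1A0, swB0A0, swB1A0, swB0A1, swB1A1, swB1B0,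
    sqA0', sqA1', sqB0', sqB1', swA1A0', swB0A0', swB1A0', swB0A1', swB1A1', swB1B0',
    mul_neg, mul_zero, neg_zero, neg_mem_iff, zero_mem]
  all_goals exact Submodule.subset_span (by simp)

lemma G5_eq : G 5 = ⊥ := by
  rw [eq_bot_iff]
  refine G_succ_le G4_le ?_
  rintro x rfl
  refine ⟨?_, ?_, ?_, ?_⟩ <;>
  try simp only [sqA0, sqA1, sqB0, sqB1, swA1A0, swB0A0, swB1A0, swB0A1, swB1A1, swB1B0,
    sqA0', sqA1', sqB0', sqB1', swA1A0', swB0A0', swB1A0', swB0A1', swB1A1', swB1B0',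
    mul_neg, mul_zero, neg_zero, zero_mem]

lemma G_eq_bot (q : ℕ) : G (q + 5) = ⊥ := by
  induction q with
  | zero => exact G5_eq
  | succ q ih =>
    rw [eq_bot_iff]
    refine G_succ_le (s := ∅) (by rw [show G (q + 5) = ⊥ from ih]; exact bot_le) (by simp)

/-- The coordinate functionals on `Vq` dual to `vGen 0, vGen 1`: `v ↦ v_i - v_2`. -/
def coV (i : Fin 3) : Vq →ₗ[ℚ] ℚ :=
  Submodule.liftQ Vsub
    ((LinearMap.proj i : (Fin 3 → ℚ) →ₗ[ℚ] ℚ) - (LinearMap.proj 2 : (Fin 3 → ℚ) →ₗ[ℚ] ℚ)) (by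
      rw [Vsub, Submodule.span_le]
      rintro v rfl
      exact sub_self (1 : ℚ))

/-- Contraction of `E(2)` with the functional dual to the basis vector indexed by `(j, i)`. -/
def ct (j : Fin 2) (i : Fin 3) : Em 2 →ₗ[ℚ] Em 2 :=
  CliffordAlgebra.contractLeft (Q := (0 : QuadraticForm ℚ (Fin 2 → Vq)))
    ((coV i).comp (LinearMap.proj j))

/-- The degree-zero coefficient. -/
def c0 : Em 2 →ₗ[ℚ] ℚ := (ExteriorAlgebra.algebraMapInv (R := ℚ) (M := Fin 2 → Vq)).toLinearMap

lemma c0_one : c0 1 = 1 := by simp [c0]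

lemma ct_one (j : Fin 2) (i : Fin 3) : ct j i 1 = 0 := by
  simp [ct]

lemma ct_mul (j j' : Fin 2) (i i' : Fin 3) (z : Em 2) : ct j i (eGen 2 j' i' * z) =
    coV i ((Pi.single j' (vGen i') : Fin 2 → Vq) j) • z - eGen 2 j' i' * ct j i z :=
  CliffordAlgebra.contractLeft_ι_mul _ _ _

lemma coV_single (j j' : Fin 2) (i i' : Fin 3) :
    coV i ((Pi.single j' (vGen i') : Fin 2 → Vq) j) =
      if j = j' then (if i = i' then 1 else 0) - (if 2 = i' then 1 else 0) else 0 := by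
  by_cases h : j = j'
  · subst h
    simp [coV, vGen, Pi.single_apply]
  · simp [h, Pi.single_apply]

lemma ct_A0 (j : Fin 2) (i : Fin 3) (z : Em 2) :
    ct j i (A0 * z) = (if j = 0 ∧ i = 0 then (1 : ℚ) else 0) • z - A0 * ct j i z := by
  rw [A0, ct_mul, coV_single, ite_and]; simp
lemma ct_A1 (j : Fin 2) (i : Fin 3) (z : Em 2) :
    ct j i (A1 * z) = (if j = 0 ∧ i = 1 then (1 : ℚ) else 0) • z - A1 * ct j i z := by
  rw [A1, ct_mul, coV_single, ite_and]; simp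
lemma ct_B0 (j : Fin 2) (i : Fin 3) (z : Em 2) :
    ct j i (B0 * z) = (if j = 1 ∧ i = 0 then (1 : ℚ) else 0) • z - B0 * ct j i z := by
  rw [B0, ct_mul, coV_single, ite_and]; simp
lemma ct_B1 (j : Fin 2) (i : Fin 3) (z : Em 2) :
    ct j i (B1 * z) = (if j = 1 ∧ i = 1 then (1 : ℚ) else 0) • z - B1 * ct j i z := by
  rw [B1, ct_mul, coV_single, ite_and]; simp
lemma ct_A0' (j : Fin 2) (i : Fin 3) :
    ct j i A0 = (if j = 0 ∧ i = 0 then (1 : ℚ) else 0) • 1 := by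
  simpa [ct_one] using ct_A0 j i 1
lemma ct_A1' (j : Fin 2) (i : Fin 3) :
    ct j i A1 = (if j = 0 ∧ i = 1 then (1 : ℚ) else 0) • 1 := by
  simpa [ct_one] using ct_A1 j i 1
lemma ct_B0' (j : Fin 2) (i : Fin 3) :
    ct j i B0 = (if j = 1 ∧ i = 0 then (1 : ℚ) else 0) • 1 := by
  simpa [ct_one] using ct_B0 j i 1
lemma ct_B1' (j : Fin 2) (i : Fin 3) :
    ct j i B1 = (if j = 1 ∧ i = 1 then (1 : ℚ) else 0) • 1 := by
  simpa [ct_one] using ct_B1 j i 1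

/-! ### Linear independence of the monomials in `E(2)` -/

lemma coeff0 {a : ℚ} (h : a • (1 : Em 2) = 0) : a = 0 := by
  simpa [c0_one] using congrArg c0 h

lemma coeff1 {a b c d : ℚ} (h : a • A0 + b • A1 + c • B0 + d • B1 = 0) :
    a = 0 ∧ b = 0 ∧ c = 0 ∧ d = 0 := by
  have h1 := congrArg (fun z => c0 (ct 0 0 z)) h
  have h2 := congrArg (fun z => c0 (ct 0 1 z)) h
  have h3 := congrArg (fun z => c0 (ct 1 0 z)) h
  have h4 := congrArg (fun z => c0 (ct 1 1 z)) h
  simp [ct_A0', ct_A1', ct_B0', ct_B1', c0_one] at h1 h2 h3 h4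
  exact ⟨h1, h2, h3, h4⟩

lemma coeff2 {a b c d e f : ℚ} (h : a • (A0 * A1) + b • (A0 * B0) + c • (A0 * B1) +
    d • (A1 * B0) + e • (A1 * B1) + f • (B0 * B1) = 0) :
    a = 0 ∧ b = 0 ∧ c = 0 ∧ d = 0 ∧ e = 0 ∧ f = 0 := by
  have h1 := congrArg (fun z => c0 (ct 0 1 (ct 0 0 z))) h
  have h2 := congrArg (fun z => c0 (ct 1 0 (ct 0 0 z))) h
  have h3 := congrArg (fun z => c0 (ct 1 1 (ct 0 0 z))) h
  have h4 := congrArg (fun z => c0 (ct 1 0 (ct 0 1 z))) h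
  have h5 := congrArg (fun z => c0 (ct 1 1 (ct 0 1 z))) h
  have h6 := congrArg (fun z => c0 (ct 1 1 (ct 1 0 z))) h
  simp [ct_A0, ct_A1, ct_B0, ct_A0', ct_A1', ct_B0', ct_B1', c0_one] at h1 h2 h3 h4 h5 h6
  exact ⟨h1, h2, h3, h4, h5, h6⟩

lemma coeff3 {a b c d : ℚ} (h : a • (A0 * (A1 * B0)) + b • (A0 * (A1 * B1)) +
    c • (A0 * (B0 * B1)) + d • (A1 * (B0 * B1)) = 0) :
    a = 0 ∧ b = 0 ∧ c = 0 ∧ d = 0 := by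
  have h1 := congrArg (fun z => c0 (ct 1 0 (ct 0 1 (ct 0 0 z)))) h
  have h2 := congrArg (fun z => c0 (ct 1 1 (ct 0 1 (ct 0 0 z)))) h
  have h3 := congrArg (fun z => c0 (ct 1 1 (ct 1 0 (ct 0 0 z)))) h
  have h4 := congrArg (fun z => c0 (ct 1 1 (ct 1 0 (ct 0 1 z)))) h
  simp [ct_A0, ct_A1, ct_B0, ct_A0', ct_A1', ct_B0', ct_B1', c0_one] at h1 h2 h3 h4
  exact ⟨h1, h2, h3, h4⟩

lemma coeff4 {a : ℚ} (h : a • (A0 * (A1 * (B0 * B1))) = 0) : a = 0 := by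
  have h1 := congrArg (fun z => c0 (ct 1 1 (ct 1 0 (ct 0 1 (ct 0 0 z))))) h
  simpa [ct_A0, ct_A1, ct_B0, ct_A0', ct_A1', ct_B0', ct_B1', c0_one] using h1

/-! ### The action of `S₃` on `E(2)` -/

/-- The action of a permutation on `E(2)`. -/
def pE (σ : Equiv.Perm (Fin 3)) : Em 2 →ₐ[ℚ] Em 2 :=
  extHom (LinearMap.compLeft (permV σ) (Fin 2))

lemma permV_vGen (σ : Equiv.Perm (Fin 3)) (i : Fin 3) : permV σ (vGen i) = vGen (σ i) := by
  simp only [permV, vGen]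
  erw [Submodule.mapQ_apply]
  congr 1
  ext k
  simp only [LinearMap.funLeft_apply, Pi.single_apply, Equiv.Perm.inv_eq_iff_eq]

lemma pE_eGen (σ : Equiv.Perm (Fin 3)) (j : Fin 2) (i : Fin 3) :
    pE σ (eGen 2 j i) = eGen 2 j (σ i) := by
  simp only [pE, extHom, eGen]
  rw [ExteriorAlgebra.lift_ι_apply]
  simp only [LinearMap.comp_apply]
  congr 1
  ext k
  by_cases h : k = j
  · subst h; simp [permV_vGen]
  · simp [h, Pi.single_apply]

/-- The transposition exchanging the first two indices. -/
def sw : Equiv.Perm (Fin 3) := Equiv.swap 0 1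
/-- The transposition exchanging the last two indices. -/
def uw : Equiv.Perm (Fin 3) := Equiv.swap 1 2

lemma sA0 : pE sw A0 = A1 := pE_eGen _ _ _
lemma sA1 : pE sw A1 = A0 := pE_eGen _ _ _
lemma sB0 : pE sw B0 = B1 := pE_eGen _ _ _
lemma sB1 : pE sw B1 = B0 := pE_eGen _ _ _
lemma uA0 : pE uw A0 = A0 := pE_eGen _ _ _
lemma uA1 : pE uw A1 = -A0 - A1 := (pE_eGen _ _ _).trans (eGen_two 0)
lemma uB0 : pE uw B0 = B0 := pE_eGen _ _ _
lemma uB1 : pE uw B1 = -B0 - B1 := (pE_eGen _ _ _).trans (eGen_two 1)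

lemma pE_mem_G (σ : Equiv.Perm (Fin 3)) {q : ℕ} {w : Em 2} (hw : w ∈ G q) : pE σ w ∈ G q := by
  induction hw using Submodule.span_induction with
  | mem x hx =>
    obtain ⟨l, hl, rfl⟩ := hx
    refine Submodule.subset_span ⟨l.map fun pr => (pr.1, σ pr.2), by simp [hl], ?_⟩
    rw [map_list_prod, List.map_map, List.map_map]
    congr 2
    funext pr
    exact pE_eGen _ _ _
  | zero => simp
  | add x y _ _ hx hy => rw [map_add]; exact add_mem hx hy
  | smul c x _ hx => rw [map_smul]; exact Submodule.smul_mem _ _ hx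

/-! ### Isotypic parts of the exterior algebra -/

/-- The vectors of `E(2)` in degree `q` on which both transpositions act by the scalar `ε`:
the multiplicity space of the trivial (`ε = 1`) or sign (`ε = -1`) representation. -/
def TS (ε : ℚ) (q : ℕ) : Submodule ℚ (Em 2) :=
  G q ⊓ (LinearMap.ker ((pE sw).toLinearMap - ε • LinearMap.id) ⊓
    LinearMap.ker ((pE uw).toLinearMap - ε • LinearMap.id))

/-- The multiplicity space of the reflection representation `V` in `E(2)` in degree `q`. If
`e₀, e₁` span a copy of `V`, with `e₀ ↔ e₁` under the first transposition and `e₀ ↦ e₀`,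
`e₁ ↦ -e₀ - e₁` under the second one, then `e₀ ⊗ w + e₁ ⊗ w'` is invariant exactly when
`w' = pE sw w` and `w ∈ TV q`. -/
def TV (q : ℕ) : Submodule ℚ (Em 2) :=
  G q ⊓ (LinearMap.ker ((pE uw).toLinearMap ∘ₗ (pE sw).toLinearMap + (pE sw).toLinearMap) ⊓
    LinearMap.ker ((pE uw).toLinearMap + (pE sw).toLinearMap - LinearMap.id))

lemma mem_TS {ε : ℚ} {q : ℕ} {w : Em 2} :
    w ∈ TS ε q ↔ w ∈ G q ∧ pE sw w = ε • w ∧ pE uw w = ε • w := by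
  simp [TS, sub_eq_zero]

lemma mem_TV {q : ℕ} {w : Em 2} :
    w ∈ TV q ↔ w ∈ G q ∧ pE uw (pE sw w) + pE sw w = 0 ∧ pE uw w + pE sw w = w := by
  simp [TV, sub_eq_zero]

/-- The general element of degree one. -/
def w1 (a b c d : ℚ) : Em 2 := a • A0 + b • A1 + c • B0 + d • B1

/-- The general element of degree two. -/
def w2 (a b c d e f : ℚ) : Em 2 := a • (A0 * A1) + b • (A0 * B0) + c • (A0 * B1) +
    d • (A1 * B0) + e • (A1 * B1) + f • (B0 * B1)

/-- The general element of degree three. -/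
def w3 (a b c d : ℚ) : Em 2 := a • (A0 * (A1 * B0)) + b • (A0 * (A1 * B1)) +
    c • (A0 * (B0 * B1)) + d • (A1 * (B0 * B1))

/-- The general element of degree four. -/
def w4 (a : ℚ) : Em 2 := a • (A0 * (A1 * (B0 * B1)))

lemma w1_add (a b c d a' b' c' d' : ℚ) :
    w1 a b c d + w1 a' b' c' d' = w1 (a + a') (b + b') (c + c') (d + d') := by
  simp only [w1]; module
lemma w2_add (a b c d e f a' b' c' d' e' f' : ℚ) : w2 a b c d e f + w2 a' b' c' d' e' f' =
    w2 (a + a') (b + b') (c + c') (d + d') (e + e') (f + f') := by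
  simp only [w2]; module
lemma w3_add (a b c d a' b' c' d' : ℚ) :
    w3 a b c d + w3 a' b' c' d' = w3 (a + a') (b + b') (c + c') (d + d') := by
  simp only [w3]; module
lemma w4_add (a a' : ℚ) : w4 a + w4 a' = w4 (a + a') := by
  simp only [w4]; module
lemma w1_smul (r a b c d : ℚ) : r • w1 a b c d = w1 (r * a) (r * b) (r * c) (r * d) := by
  simp only [w1]; module
lemma w2_smul (r a b c d e f : ℚ) :
    r • w2 a b c d e f = w2 (r * a) (r * b) (r * c) (r * d) (r * e) (r * f) := by
  simp only [w2]; module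
lemma w3_smul (r a b c d : ℚ) : r • w3 a b c d = w3 (r * a) (r * b) (r * c) (r * d) := by
  simp only [w3]; module
lemma w4_smul (r a : ℚ) : r • w4 a = w4 (r * a) := by
  simp only [w4]; module

lemma w1_eq_zero {a b c d : ℚ} : w1 a b c d = 0 ↔ a = 0 ∧ b = 0 ∧ c = 0 ∧ d = 0 :=
  ⟨coeff1, by rintro ⟨rfl, rfl, rfl, rfl⟩; simp [w1]⟩
lemma w2_eq_zero {a b c d e f : ℚ} :
    w2 a b c d e f = 0 ↔ a = 0 ∧ b = 0 ∧ c = 0 ∧ d = 0 ∧ e = 0 ∧ f = 0 :=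
  ⟨coeff2, by rintro ⟨rfl, rfl, rfl, rfl, rfl, rfl⟩; simp [w2]⟩
lemma w3_eq_zero {a b c d : ℚ} : w3 a b c d = 0 ↔ a = 0 ∧ b = 0 ∧ c = 0 ∧ d = 0 :=
  ⟨coeff3, by rintro ⟨rfl, rfl, rfl, rfl⟩; simp [w3]⟩
lemma w4_eq_zero {a : ℚ} : w4 a = 0 ↔ a = 0 :=
  ⟨coeff4, by rintro rfl; simp [w4]⟩

lemma w1_inj {a b c d a' b' c' d' : ℚ} :
    w1 a b c d = w1 a' b' c' d' ↔ a = a' ∧ b = b' ∧ c = c' ∧ d = d' := by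
  rw [← sub_eq_zero, show w1 a b c d - w1 a' b' c' d' = w1 (a - a') (b - b') (c - c') (d - d') by
    simp only [w1]; module, w1_eq_zero]
  simp only [sub_eq_zero]
lemma w2_inj {a b c d e f a' b' c' d' e' f' : ℚ} : w2 a b c d e f = w2 a' b' c' d' e' f' ↔
    a = a' ∧ b = b' ∧ c = c' ∧ d = d' ∧ e = e' ∧ f = f' := by
  rw [← sub_eq_zero, show w2 a b c d e f - w2 a' b' c' d' e' f' =
    w2 (a - a') (b - b') (c - c') (d - d') (e - e') (f - f') by simp only [w2]; module, w2_eq_zero]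
  simp only [sub_eq_zero]
lemma w3_inj {a b c d a' b' c' d' : ℚ} :
    w3 a b c d = w3 a' b' c' d' ↔ a = a' ∧ b = b' ∧ c = c' ∧ d = d' := by
  rw [← sub_eq_zero, show w3 a b c d - w3 a' b' c' d' = w3 (a - a') (b - b') (c - c') (d - d') by
    simp only [w3]; module, w3_eq_zero]
  simp only [sub_eq_zero]
lemma w4_inj {a a' : ℚ} : w4 a = w4 a' ↔ a = a' := by
  rw [← sub_eq_zero, show w4 a - w4 a' = w4 (a - a') by simp only [w4]; module, w4_eq_zero,
    sub_eq_zero]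

/-- In terms of coordinates, `S1, …, S4` describe the action of the transposition `sw` in degrees
`1, …, 4`, and `U1, …, U4` that of `uw`. -/
lemma S1 (a b c d : ℚ) : pE sw (w1 a b c d) = w1 b a d c := by
  simp only [w1, map_add, map_smul, sA0, sA1, sB0, sB1]
  module
lemma U1 (a b c d : ℚ) : pE uw (w1 a b c d) = w1 (a - b) (-b) (c - d) (-d) := by
  simp only [w1, map_add, map_smul, uA0, uA1, uB0, uB1]
  module
lemma S2 (a b c d e f : ℚ) : pE sw (w2 a b c d e f) = w2 (-a) e d c b (-f) := by
  simp only [w2, map_add, map_smul, map_mul, sA0, sA1, sB0, sB1, swA1A0, swB1B0]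
  module
lemma U2 (a b c d e f : ℚ) : pE uw (w2 a b c d e f) =
    w2 (-a) (b - c - d + e) (e - c) (e - d) e (-f) := by
  simp only [w2, map_add, map_smul, map_mul, uA0, uA1, uB0, uB1, mul_sub, sub_mul, mul_neg,
    neg_mul, sqA0, sqB0]
  module
lemma S3 (a b c d : ℚ) : pE sw (w3 a b c d) = w3 (-b) (-a) (-d) (-c) := by
  simp only [w3, map_add, map_smul, map_mul, sA0, sA1, sB0, sB1, swA1A0', swB1B0, mul_neg]
  module
lemma U3 (a b c d : ℚ) : pE uw (w3 a b c d) = w3 (b - a) b (d - c) d := by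
  simp only [w3, map_add, map_smul, map_mul, uA0, uA1, uB0, uB1, mul_sub, sub_mul, mul_neg,
    neg_mul, sqA0', sqB0, mul_zero]
  module
lemma S4 (a : ℚ) : pE sw (w4 a) = w4 a := by
  simp only [w4, map_smul, map_mul, sA0, sA1, sB0, sB1, swA1A0', swB1B0, mul_neg, neg_neg]
lemma U4 (a : ℚ) : pE uw (w4 a) = w4 a := by
  simp only [w4, map_smul, map_mul, uA0, uA1, uB0, uB1, mul_sub, sub_mul, mul_neg,
    neg_mul, sqA0', sqB0, mul_zero]
  module

lemma mem_G0 {w : Em 2} (hw : w ∈ G 0) : ∃ a : ℚ, w = a • 1 := by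
  obtain ⟨a, rfl⟩ := Submodule.mem_span_singleton.mp (G0_le hw)
  exact ⟨a, rfl⟩
lemma mem_G1 {w : Em 2} : w ∈ G 1 ↔ ∃ a b c d : ℚ, w = w1 a b c d := by
  constructor
  · intro hw
    have := G1_le hw
    simp only [Submodule.mem_span_insert, Submodule.mem_span_singleton] at this
    obtain ⟨a, _, ⟨b, _, ⟨c, _, ⟨d, rfl⟩, rfl⟩, rfl⟩, rfl⟩ := this
    exact ⟨a, b, c, d, by simp only [w1]; module⟩
  · rintro ⟨a, b, c, d, rfl⟩
    have h := @Submodule.smul_mem _ _ _ _ _ (G 1)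
    exact add_mem (add_mem (add_mem (h a A0_mem) (h b A1_mem)) (h c B0_mem)) (h d B1_mem)
lemma mem_G2 {w : Em 2} : w ∈ G 2 ↔ ∃ a b c d e f : ℚ, w = w2 a b c d e f := by
  constructor
  · intro hw
    have := G2_le hw
    simp only [Submodule.mem_span_insert, Submodule.mem_span_singleton] at this
    obtain ⟨a, _, ⟨b, _, ⟨c, _, ⟨d, _, ⟨e, _, ⟨f, rfl⟩, rfl⟩, rfl⟩, rfl⟩, rfl⟩, rfl⟩ := this
    exact ⟨a, b, c, d, e, f, by simp only [w2]; module⟩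
  · rintro ⟨a, b, c, d, e, f, rfl⟩
    have h := @Submodule.smul_mem _ _ _ _ _ (G 2)
    exact add_mem (add_mem (add_mem (add_mem (add_mem (h a (A0_mul_mem A1_mem))
      (h b (A0_mul_mem B0_mem))) (h c (A0_mul_mem B1_mem))) (h d (A1_mul_mem B0_mem)))
      (h e (A1_mul_mem B1_mem))) (h f (B0_mul_mem B1_mem))
lemma mem_G3 {w : Em 2} : w ∈ G 3 ↔ ∃ a b c d : ℚ, w = w3 a b c d := by
  constructor
  · intro hw
    have := G3_le hw
    simp only [Submodule.mem_span_insert, Submodule.mem_span_singleton] at this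
    obtain ⟨a, _, ⟨b, _, ⟨c, _, ⟨d, rfl⟩, rfl⟩, rfl⟩, rfl⟩ := this
    exact ⟨a, b, c, d, by simp only [w3]; module⟩
  · rintro ⟨a, b, c, d, rfl⟩
    have h := @Submodule.smul_mem _ _ _ _ _ (G 3)
    exact add_mem (add_mem (add_mem (h a (A0_mul_mem (A1_mul_mem B0_mem)))
      (h b (A0_mul_mem (A1_mul_mem B1_mem)))) (h c (A0_mul_mem (B0_mul_mem B1_mem))))
      (h d (A1_mul_mem (B0_mul_mem B1_mem)))
lemma mem_G4 {w : Em 2} : w ∈ G 4 ↔ ∃ a : ℚ, w = w4 a := by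
  constructor
  · intro hw
    obtain ⟨a, rfl⟩ := Submodule.mem_span_singleton.mp (G4_le hw)
    exact ⟨a, rfl⟩
  · rintro ⟨a, rfl⟩
    exact Submodule.smul_mem _ _ (A0_mul_mem (A1_mul_mem (B0_mul_mem B1_mem)))

lemma finrank_of_basis {M : Type*} [AddCommGroup M] [Module ℚ M] {n : ℕ} {T : Submodule ℚ M}
    (v : Fin n → M) (hv : ∀ i, v i ∈ T) (hs : ∀ w ∈ T, ∃ c : Fin n → ℚ, w = ∑ i, c i • v i)
    (hl : ∀ c : Fin n → ℚ, ∑ i, c i • v i = 0 → ∀ i, c i = 0) : Module.finrank ℚ T = n := by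
  have hT : T = Submodule.span ℚ (Set.range v) := by
    apply le_antisymm
    · intro w hw
      obtain ⟨c, rfl⟩ := hs w hw
      exact sum_mem fun i _ => Submodule.smul_mem _ _ (Submodule.subset_span ⟨i, rfl⟩)
    · rw [Submodule.span_le]
      rintro _ ⟨i, rfl⟩
      exact hv i
  rw [hT, finrank_span_eq_card (Fintype.linearIndependent_iff.mpr hl), Fintype.card_fin]

lemma TS_one_zero : Module.finrank ℚ (TS 1 0) = 1 := by
  refine finrank_of_basis (n := 1) ![1] ?_ ?_ ?_
  · simp [Fin.forall_fin_one, mem_TS, one_mem_G]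
  · intro w hw
    obtain ⟨a, rfl⟩ := mem_G0 (mem_TS.mp hw).1
    exact ⟨![a], by simp⟩
  · intro c hc
    simpa [Fin.forall_fin_one] using coeff0 (by simpa using hc)

lemma TS_neg_zero : TS (-1) 0 = ⊥ := by
  rw [eq_bot_iff]
  intro w hw
  obtain ⟨hG, hs, hu⟩ := mem_TS.mp hw
  obtain ⟨a, rfl⟩ := mem_G0 hG
  have : a = 0 := by
    have := coeff0 (a := 2 * a) (by
      simp only [map_smul, map_one] at hs
      linear_combination (norm := module) hs)
    linarith
  simp [this]

lemma TV_zero : TV 0 = ⊥ := by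
  rw [eq_bot_iff]
  intro w hw
  obtain ⟨hG, hs, hu⟩ := mem_TV.mp hw
  obtain ⟨a, rfl⟩ := mem_G0 hG
  have : a = 0 := by
    have := coeff0 (a := a) (by
      simp only [map_smul, map_one] at hu
      linear_combination (norm := module) hu)
    linarith
  simp [this]

lemma TS_one (ε : ℚ) (hε : ε = 1 ∨ ε = -1) : TS ε 1 = ⊥ := by
  rw [eq_bot_iff]
  intro w hw
  obtain ⟨hG, hs, hu⟩ := mem_TS.mp hw
  obtain ⟨a, b, c, d, rfl⟩ := mem_G1.mp hG
  simp only [S1, U1, w1_smul, w1_inj] at hs hu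
  obtain ⟨s1, s2, s3, s4⟩ := hs
  obtain ⟨u1, u2, u3, u4⟩ := hu
  rw [Submodule.mem_bot, w1_eq_zero]
  rcases hε with rfl | rfl <;> refine ⟨?_, ?_, ?_, ?_⟩ <;> linarith

lemma TV_one : Module.finrank ℚ (TV 1) = 2 := by
  refine finrank_of_basis (n := 2) ![w1 2 1 0 0, w1 0 0 2 1] ?_ ?_ ?_
  · simp only [Fin.forall_fin_two, mem_TV, Matrix.cons_val_zero, Matrix.cons_val_one]
    simp only [S1, U1, w1_add, w1_eq_zero, w1_inj]
    exact ⟨⟨mem_G1.mpr ⟨_, _, _, _, rfl⟩, by norm_num⟩, mem_G1.mpr ⟨_, _, _, _, rfl⟩, by norm_num⟩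
  · intro w hw
    obtain ⟨hG, hs, hu⟩ := mem_TV.mp hw
    obtain ⟨a, b, c, d, rfl⟩ := mem_G1.mp hG
    simp only [S1, U1, w1_add, w1_eq_zero, w1_inj] at hs hu
    refine ⟨![b, d], ?_⟩
    simp only [Fin.sum_univ_two, Matrix.cons_val_zero, Matrix.cons_val_one, w1_smul, w1_add, w1_inj]
    refine ⟨?_, ?_, ?_, ?_⟩ <;> linarith
  · intro c hc
    simp only [Fin.sum_univ_two, Matrix.cons_val_zero, Matrix.cons_val_one, w1_smul, w1_add,
      w1_eq_zero] at hc
    rw [Fin.forall_fin_two]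
    constructor <;> linarith

lemma TS_one_two : Module.finrank ℚ (TS 1 2) = 1 := by
  refine finrank_of_basis (n := 1) ![w2 0 2 1 1 2 0] ?_ ?_ ?_
  · simp only [Fin.forall_fin_one, mem_TS, Matrix.cons_val_zero]
    simp only [S2, U2, w2_smul, w2_inj]
    exact ⟨mem_G2.mpr ⟨_, _, _, _, _, _, rfl⟩, by norm_num⟩
  · intro w hw
    obtain ⟨hG, hs, hu⟩ := mem_TS.mp hw
    obtain ⟨a, b, c, d, e, f, rfl⟩ := mem_G2.mp hG
    simp only [S2, U2, w2_smul, w2_inj] at hs hu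
    refine ⟨![c], ?_⟩
    simp only [Fin.sum_univ_one, Matrix.cons_val_zero, w2_smul, w2_inj]
    refine ⟨?_, ?_, ?_, ?_, ?_, ?_⟩ <;> linarith
  · intro c hc
    simp only [Fin.sum_univ_one, Matrix.cons_val_zero, w2_smul, w2_eq_zero] at hc
    rw [Fin.forall_fin_one]
    linarith

lemma TS_neg_two : Module.finrank ℚ (TS (-1) 2) = 3 := by
  refine finrank_of_basis (n := 3)
    ![w2 1 0 0 0 0 0, w2 0 0 1 (-1) 0 0, w2 0 0 0 0 0 1] ?_ ?_ ?_
  · have h (a c f : ℚ) : w2 a 0 c (-c) 0 f ∈ TS (-1) 2 := by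
      refine mem_TS.mpr ⟨mem_G2.mpr ⟨_, _, _, _, _, _, rfl⟩, ?_⟩
      simp only [S2, U2, w2_smul, w2_inj]
      norm_num
    intro i
    fin_cases i
    · simpa using h 1 0 0
    · simpa using h 0 1 0
    · simpa using h 0 0 1
  · intro w hw
    obtain ⟨hG, hs, hu⟩ := mem_TS.mp hw
    obtain ⟨a, b, c, d, e, f, rfl⟩ := mem_G2.mp hG
    simp only [S2, U2, w2_smul, w2_inj] at hs hu
    refine ⟨![a, c, f], ?_⟩
    simp only [Fin.sum_univ_three, Matrix.cons_val, w2_smul, w2_add, w2_inj]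
    refine ⟨?_, ?_, ?_, ?_, ?_, ?_⟩ <;> linarith
  · intro c hc
    simp only [Fin.sum_univ_three, Matrix.cons_val, w2_smul, w2_add, w2_eq_zero] at hc
    intro i
    fin_cases i <;> simp <;> linarith

lemma TV_two : Module.finrank ℚ (TV 2) = 1 := by
  refine finrank_of_basis (n := 1) ![w2 0 0 1 1 1 0] ?_ ?_ ?_
  · simp only [Fin.forall_fin_one, mem_TV, Matrix.cons_val_zero]
    simp only [S2, U2, w2_add, w2_eq_zero, w2_inj]
    exact ⟨mem_G2.mpr ⟨_, _, _, _, _, _, rfl⟩, by norm_num⟩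
  · intro w hw
    obtain ⟨hG, hs, hu⟩ := mem_TV.mp hw
    obtain ⟨a, b, c, d, e, f, rfl⟩ := mem_G2.mp hG
    simp only [S2, U2, w2_add, w2_eq_zero, w2_inj] at hs hu
    refine ⟨![c], ?_⟩
    simp only [Fin.sum_univ_one, Matrix.cons_val_zero, w2_smul, w2_inj]
    refine ⟨?_, ?_, ?_, ?_, ?_, ?_⟩ <;> linarith
  · intro c hc
    simp only [Fin.sum_univ_one, Matrix.cons_val_zero, w2_smul, w2_eq_zero] at hc
    rw [Fin.forall_fin_one]
    linarith

lemma TS_three (ε : ℚ) (hε : ε = 1 ∨ ε = -1) : TS ε 3 = ⊥ := by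
  rw [eq_bot_iff]
  intro w hw
  obtain ⟨hG, hs, hu⟩ := mem_TS.mp hw
  obtain ⟨a, b, c, d, rfl⟩ := mem_G3.mp hG
  simp only [S3, U3, w3_smul, w3_inj] at hs hu
  obtain ⟨s1, s2, s3, s4⟩ := hs
  obtain ⟨u1, u2, u3, u4⟩ := hu
  rw [Submodule.mem_bot, w3_eq_zero]
  rcases hε with rfl | rfl <;> refine ⟨?_, ?_, ?_, ?_⟩ <;> linarith

lemma TV_three : Module.finrank ℚ (TV 3) = 2 := by
  refine finrank_of_basis (n := 2) ![w3 0 1 0 0, w3 0 0 0 1] ?_ ?_ ?_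
  · simp only [Fin.forall_fin_two, mem_TV, Matrix.cons_val_zero, Matrix.cons_val_one]
    simp only [S3, U3, w3_add, w3_eq_zero, w3_inj]
    exact ⟨⟨mem_G3.mpr ⟨_, _, _, _, rfl⟩, by norm_num⟩, mem_G3.mpr ⟨_, _, _, _, rfl⟩, by norm_num⟩
  · intro w hw
    obtain ⟨hG, hs, hu⟩ := mem_TV.mp hw
    obtain ⟨a, b, c, d, rfl⟩ := mem_G3.mp hG
    simp only [S3, U3, w3_add, w3_eq_zero, w3_inj] at hs hu
    refine ⟨![b, d], ?_⟩
    simp only [Fin.sum_univ_two, Matrix.cons_val_zero, Matrix.cons_val_one, w3_smul, w3_add, w3_inj]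
    refine ⟨?_, ?_, ?_, ?_⟩ <;> linarith
  · intro c hc
    simp only [Fin.sum_univ_two, Matrix.cons_val_zero, Matrix.cons_val_one, w3_smul, w3_add,
      w3_eq_zero] at hc
    rw [Fin.forall_fin_two]
    constructor <;> linarith

lemma TS_one_four : Module.finrank ℚ (TS 1 4) = 1 := by
  refine finrank_of_basis (n := 1) ![w4 1] ?_ ?_ ?_
  · simp only [Fin.forall_fin_one, mem_TS, Matrix.cons_val_zero]
    simp only [S4, U4, w4_smul, w4_inj]
    exact ⟨mem_G4.mpr ⟨_, rfl⟩, by norm_num⟩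
  · intro w hw
    obtain ⟨a, rfl⟩ := mem_G4.mp (mem_TS.mp hw).1
    exact ⟨![a], by simp [w4_smul]⟩
  · intro c hc
    simp only [Fin.sum_univ_one, Matrix.cons_val_zero, w4_smul, w4_eq_zero] at hc
    rw [Fin.forall_fin_one]
    linarith

lemma TS_neg_four : TS (-1) 4 = ⊥ := by
  rw [eq_bot_iff]
  intro w hw
  obtain ⟨hG, hs, hu⟩ := mem_TS.mp hw
  obtain ⟨a, rfl⟩ := mem_G4.mp hG
  simp only [S4, w4_smul, w4_inj] at hs
  rw [Submodule.mem_bot, w4_eq_zero]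
  linarith

lemma TV_four : TV 4 = ⊥ := by
  rw [eq_bot_iff]
  intro w hw
  obtain ⟨hG, hs, hu⟩ := mem_TV.mp hw
  obtain ⟨a, rfl⟩ := mem_G4.mp hG
  simp only [S4, U4, w4_add, w4_inj] at hu
  rw [Submodule.mem_bot, w4_eq_zero]
  linarith

lemma TS_big (ε : ℚ) (q : ℕ) : TS ε (q + 5) = ⊥ := by
  rw [TS, G_eq_bot, bot_inf_eq]

lemma TV_big (q : ℕ) : TV (q + 5) = ⊥ := by
  rw [TV, G_eq_bot, bot_inf_eq]

/-! ### The algebra `A` -/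

/-- The class of `x` in `A`. -/
def xA : Aq := mkA (X 0)
/-- The class of `y` in `A`. -/
def yA : Aq := mkA (X 1)
/-- The class of `w` in `A`. -/
def wA : Aq := mkA (X 2)

lemma mkA_eq_zero {p : P3} : mkA p = 0 ↔ p ∈ Jid := Ideal.Quotient.eq_zero_iff_mem

lemma wA_eq : wA = -xA - yA := by
  have h : mkA (X 0 + X 1 + X 2) = 0 := mkA_eq_zero.mpr (Ideal.subset_span (by simp))
  simp only [map_add] at h
  change xA + yA + wA = 0 at h
  linear_combination h

lemma yA_sq : yA ^ 2 = -(xA * yA) - xA ^ 2 := by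
  have h : mkA (X 0 ^ 2 + X 1 ^ 2 + X 2 ^ 2) = 0 := mkA_eq_zero.mpr (Ideal.subset_span (by simp))
  simp only [map_add, map_pow] at h
  change xA ^ 2 + yA ^ 2 + wA ^ 2 = 0 at h
  have h2 : (2 : ℚ) • (yA ^ 2 + xA * yA + xA ^ 2) = 0 := by
    rw [wA_eq] at h
    rw [two_smul]
    linear_combination h
  have h3 := (smul_eq_zero.mp h2).resolve_left (by norm_num)
  linear_combination h3

lemma yA_cube : yA ^ 3 = xA ^ 3 := by
  linear_combination (yA - xA) * yA_sq

lemma xA_six : xA ^ 6 = 0 := by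
  have h : mkA (X 0 ^ 6 + X 1 ^ 6 + X 2 ^ 6) = 0 := mkA_eq_zero.mpr (Ideal.subset_span (by simp))
  simp only [map_add, map_pow] at h
  change xA ^ 6 + yA ^ 6 + wA ^ 6 = 0 at h
  have hw : wA ^ 3 = xA ^ 3 := by
    rw [wA_eq]
    linear_combination (-yA - 2 * xA) * yA_sq
  have h2 : (3 : ℚ) • (xA ^ 6) = 0 := by
    rw [show (3 : ℚ) = 1 + 1 + 1 by norm_num, add_smul, add_smul, one_smul]
    linear_combination h - (yA ^ 3 + xA ^ 3) * yA_cube - (wA ^ 3 + xA ^ 3) * hw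
  exact (smul_eq_zero.mp h2).resolve_left (by norm_num)

/-- The part of `A` of polynomial degree `d`, that is, of internal degree `2d`. -/
def Ad (d : ℕ) : Submodule ℚ Aq :=
  Submodule.span ℚ {e | ∃ a b c : ℕ, a + b + c = d ∧ e = mkA (X 0 ^ a * X 1 ^ b * X 2 ^ c)}

lemma xy_mem_Ad (a b : ℕ) : xA ^ a * yA ^ b ∈ Ad (a + b) :=
  Submodule.subset_span ⟨a, b, 0, rfl, by simp [xA, yA]⟩

lemma Ad_succ_le {d : ℕ} {s : Set Aq} {T : Submodule ℚ Aq} (hA : Ad d ≤ Submodule.span ℚ s)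
    (h : ∀ e ∈ s, xA * e ∈ T ∧ yA * e ∈ T) : Ad (d + 1) ≤ T := by
  have key : ∀ e ∈ Ad d, xA * e ∈ T ∧ yA * e ∈ T ∧ wA * e ∈ T := by
    intro e he
    have : xA * e ∈ T ∧ yA * e ∈ T := by
      have he' := hA he
      clear he
      induction he' using Submodule.span_induction with
      | mem x hx => exact h x hx
      | zero => simp
      | add x y hx hy h1 h2 =>
        rw [mul_add, mul_add]
        exact ⟨add_mem h1.1 h2.1, add_mem h1.2 h2.2⟩
      | smul c x _ hx =>
        rw [mul_smul_comm, mul_smul_comm]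
        exact ⟨T.smul_mem c hx.1, T.smul_mem c hx.2⟩
    refine ⟨this.1, this.2, ?_⟩
    rw [show wA * e = -(xA * e) - yA * e by rw [wA_eq]; ring]
    exact sub_mem (neg_mem this.1) this.2
  refine Submodule.span_le.mpr ?_
  rintro _ ⟨a, b, c, habc, rfl⟩
  rw [SetLike.mem_coe]
  rcases a with _ | a
  · rcases b with _ | b
    · rcases c with _ | c
      · omega
      · have := (key (mkA (X 0 ^ 0 * X 1 ^ 0 * X 2 ^ c))
          (Submodule.subset_span ⟨0, 0, c, by omega, rfl⟩)).2.2
        rw [wA, ← map_mul] at this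
        convert this using 2
        ring
    · have := (key (mkA (X 0 ^ 0 * X 1 ^ b * X 2 ^ c))
        (Submodule.subset_span ⟨0, b, c, by omega, rfl⟩)).2.1
      rw [yA, ← map_mul] at this
      convert this using 2
      ring
  · have := (key (mkA (X 0 ^ a * X 1 ^ b * X 2 ^ c))
      (Submodule.subset_span ⟨a, b, c, by omega, rfl⟩)).1
    rw [xA, ← map_mul] at this
    convert this using 2
    ring

lemma Ad_zero_le : Ad 0 ≤ Submodule.span ℚ {1} := by
  refine Submodule.span_le.mpr ?_
  rintro _ ⟨a, b, c, h, rfl⟩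
  obtain ⟨rfl, rfl, rfl⟩ : a = 0 ∧ b = 0 ∧ c = 0 := by omega
  exact Submodule.subset_span (by simp)

/-- `A` is generated as a module over `ℚ[x]` by `1` and `y`. -/
lemma Ad_le (d : ℕ) : Ad (d + 1) ≤ Submodule.span ℚ {xA ^ (d + 1), xA ^ d * yA} := by
  induction d with
  | zero =>
    refine Ad_succ_le Ad_zero_le ?_
    rintro e rfl
    constructor <;> exact Submodule.subset_span (by simp)
  | succ d ih =>
    have h1 : xA ^ (d + 2) ∈ Submodule.span ℚ {xA ^ (d + 2), xA ^ (d + 1) * yA} :=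
      Submodule.subset_span (by simp)
    have h2 : xA ^ (d + 1) * yA ∈ Submodule.span ℚ {xA ^ (d + 2), xA ^ (d + 1) * yA} :=
      Submodule.subset_span (by simp)
    refine Ad_succ_le ih ?_
    rintro e (rfl | rfl)
    · exact ⟨by convert h1 using 1; ring, by convert h2 using 1; ring⟩
    · refine ⟨by convert h2 using 1; ring, ?_⟩
      have : yA * (xA ^ d * yA) = -(xA ^ (d + 1) * yA) - xA ^ (d + 2) := by
        linear_combination xA ^ d * yA_sq
      rw [this]
      exact sub_mem (neg_mem h2) h1

lemma Ad_six_le : Ad 6 ≤ Submodule.span ℚ {xA ^ 5 * yA} := by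
  have h := Ad_le 5
  rwa [show 5 + 1 = 6 from rfl, xA_six, Submodule.span_insert_zero] at h

lemma Ad_big (d : ℕ) : Ad (d + 7) = ⊥ := by
  rw [eq_bot_iff]
  have h := Ad_le (d + 6)
  rwa [show xA ^ (d + 6 + 1) = 0 by rw [pow_add, pow_add, xA_six]; simp,
    show xA ^ (d + 6) = 0 by rw [pow_add, xA_six]; simp, zero_mul, Set.pair_eq_singleton,
    Submodule.span_zero_singleton] at h

/-- The free `ℚ[t]`-algebra on `1, ω` with `ω² = -t² - tω`, in which `A ≅ ℚ[t, ω]/(t⁶)` can be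
computed by sending `x ↦ t` and `y ↦ ω`. -/
abbrev Bq : Type := QuadraticAlgebra (Polynomial ℚ) (-Polynomial.X ^ 2) (-Polynomial.X)

/-- The element `t` of `Bq`. -/
def tB : Bq := ⟨Polynomial.X, 0⟩

/-- The element `ω` of `Bq`. -/
def oB : Bq := ⟨0, 1⟩

lemma oB_sq : oB ^ 2 = -(tB * oB) - tB ^ 2 := by
  ext <;> simp [oB, tB, pow_two]

lemma tB_pow (n : ℕ) : tB ^ n = ⟨Polynomial.X ^ n, 0⟩ := by
  have h : tB = algebraMap (Polynomial ℚ) Bq Polynomial.X := rfl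
  rw [h, ← map_pow]
  rfl

/-- The evaluation `x ↦ t`, `y ↦ ω`, `w ↦ -t - ω`. -/
def evB : P3 →ₐ[ℚ] Bq := aeval ![tB, oB, -tB - oB]

lemma evB_X0 : evB (X 0) = tB := by simp [evB]
lemma evB_X1 : evB (X 1) = oB := by simp [evB]
lemma evB_X2 : evB (X 2) = -tB - oB := by simp [evB]

lemma evB_mem {p : P3} (hp : p ∈ Jid) : tB ^ 6 ∣ evB p := by
  have hle : Jid ≤ (Ideal.span {tB ^ 6}).comap evB.toRingHom := by
    rw [Jid, Ideal.span_le]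
    have hw : (-tB - oB) ^ 3 = tB ^ 3 := by
      linear_combination (-oB - 2 * tB) * oB_sq
    have ho : oB ^ 3 = tB ^ 3 := by
      linear_combination (oB - tB) * oB_sq
    rintro q hq
    simp only [Set.mem_insert_iff, Set.mem_singleton_iff] at hq
    simp only [SetLike.mem_coe, Ideal.mem_comap, Ideal.mem_span_singleton,
      AlgHom.toRingHom_eq_coe, RingHom.coe_coe]
    rcases hq with rfl | rfl | rfl <;>
    simp only [map_add, map_pow, evB_X0, evB_X1, evB_X2]
    · exact ⟨0, by ring⟩
    · exact ⟨0, by linear_combination 2 * oB_sq⟩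
    · exact ⟨3, by linear_combination (oB ^ 3 + tB ^ 3) * ho + ((-tB - oB) ^ 3 + tB ^ 3) * hw⟩
  have := hle hp
  simpa [Ideal.mem_comap, Ideal.mem_span_singleton] using this

/-- A functional on `Bq` vanishing on the ideal `(t⁶)` induces one on `A`. -/
lemma exists_functional (f : Bq →ₗ[ℚ] ℚ) (hf : ∀ z, f (tB ^ 6 * z) = 0) :
    ∃ φ : Aq →ₗ[ℚ] ℚ, ∀ p, φ (mkA p) = f (evB p) := by
  refine ⟨(Submodule.liftQ (Jid.restrictScalars ℚ) (f ∘ₗ evB.toLinearMap) ?_) ∘ₗ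
    (Submodule.Quotient.restrictScalarsEquiv ℚ Jid).symm.toLinearMap, fun p => rfl⟩
  intro p hp
  obtain ⟨z, hz⟩ := evB_mem (p := p) hp
  simp [hz, hf]

lemma evB_pow (k : ℕ) : evB (X 0 ^ k) = ⟨Polynomial.X ^ k, 0⟩ := by
  rw [map_pow, evB_X0, tB_pow]

lemma evB_pow_mul (k : ℕ) : evB (X 0 ^ k * X 1) = ⟨0, Polynomial.X ^ k⟩ := by
  rw [map_mul, evB_pow, evB_X1, oB]
  ext <;> simp

/-- The coordinate functional of `x^n`. -/
lemma exists_kre {n : ℕ} (hn : n < 6) : ∃ φ : Aq →ₗ[ℚ] ℚ,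
    (∀ k, φ (xA ^ k) = if k = n then 1 else 0) ∧ ∀ k, φ (xA ^ k * yA) = 0 := by
  obtain ⟨φ, hφ⟩ := exists_functional ((Polynomial.lcoeff ℚ n) ∘ₗ
    (QuadraticAlgebra.reₗ (-Polynomial.X ^ 2 : Polynomial ℚ) (-Polynomial.X)).restrictScalars ℚ) (by
      intro z
      rw [tB_pow]
      simp [Polynomial.coeff_X_pow_mul', hn])
  refine ⟨φ, fun k => ?_, fun k => ?_⟩
  · rw [xA, ← map_pow, hφ, evB_pow]
    simp [Polynomial.coeff_X_pow, eq_comm]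
  · rw [xA, yA, ← map_pow, ← map_mul, hφ, evB_pow_mul]
    simp

/-- The coordinate functional of `x^n y`. -/
lemma exists_kim {n : ℕ} (hn : n < 6) : ∃ φ : Aq →ₗ[ℚ] ℚ,
    (∀ k, φ (xA ^ k) = 0) ∧ ∀ k, φ (xA ^ k * yA) = if k = n then 1 else 0 := by
  obtain ⟨φ, hφ⟩ := exists_functional ((Polynomial.lcoeff ℚ n) ∘ₗ
    (QuadraticAlgebra.imₗ (-Polynomial.X ^ 2 : Polynomial ℚ) (-Polynomial.X)).restrictScalars ℚ) (by
      intro z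
      rw [tB_pow]
      simp [Polynomial.coeff_X_pow_mul', hn])
  refine ⟨φ, fun k => ?_, fun k => ?_⟩
  · rw [xA, ← map_pow, hφ, evB_pow]
    simp
  · rw [xA, yA, ← map_pow, ← map_mul, hφ, evB_pow_mul]
    simp [Polynomial.coeff_X_pow, eq_comm]

lemma permAq_mkA (σ : Equiv.Perm (Fin 3)) (p : P3) : permAq σ (mkA p) = mkA (rename σ p) := rfl

lemma sxA : permAq sw xA = yA := by rw [xA, permAq_mkA, rename_X]; rfl
lemma syA : permAq sw yA = xA := by rw [yA, permAq_mkA, rename_X]; rfl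
lemma uxA : permAq uw xA = xA := by rw [xA, permAq_mkA, rename_X]; rfl
lemma uyA : permAq uw yA = -xA - yA := by
  rw [← wA_eq, yA, permAq_mkA, rename_X]; rfl

/-! ### Invariants of the tensor product -/

lemma permK_tmul (σ : Equiv.Perm (Fin 3)) (a : Aq) (w : Em 2) :
    permK 2 σ (a ⊗ₜ w) = permAq σ a ⊗ₜ pE σ w := rfl

lemma permAq_mul (σ τ : Equiv.Perm (Fin 3)) (a : Aq) :
    permAq (σ * τ) a = permAq σ (permAq τ a) := by
  obtain ⟨p, rfl⟩ := Ideal.Quotient.mk_surjective a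
  change permAq (σ * τ) (mkA p) = permAq σ (permAq τ (mkA p))
  rw [permAq_mkA, permAq_mkA, permAq_mkA, rename_rename]
  rfl

lemma permV_mul (σ τ : Equiv.Perm (Fin 3)) (v : Vq) :
    permV (σ * τ) v = permV σ (permV τ v) := by
  obtain ⟨f, rfl⟩ := Submodule.Quotient.mk_surjective Vsub v
  simp only [permV, mul_inv_rev]
  rfl

lemma pE_mul (σ τ : Equiv.Perm (Fin 3)) (w : Em 2) : pE (σ * τ) w = pE σ (pE τ w) := by
  have h : pE (σ * τ) = (pE σ).comp (pE τ) := by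
    refine ExteriorAlgebra.hom_ext (LinearMap.ext fun v => ?_)
    simp only [pE, extHom, LinearMap.comp_apply, AlgHom.toLinearMap_apply, AlgHom.comp_apply,
      ExteriorAlgebra.lift_ι_apply]
    congr 1
    ext k
    exact permV_mul _ _ _
  rw [h]
  rfl

lemma pE_one (w : Em 2) : pE 1 w = w := by
  have h : pE 1 = AlgHom.id ℚ (Em 2) := by
    refine ExteriorAlgebra.hom_ext (LinearMap.ext fun v => ?_)
    simp only [pE, extHom, LinearMap.comp_apply, AlgHom.toLinearMap_apply, AlgHom.id_apply,
      ExteriorAlgebra.lift_ι_apply]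
    congr 1
    ext k
    obtain ⟨f, hf⟩ := Submodule.Quotient.mk_surjective Vsub (v k)
    change permV 1 (v k) = v k
    rw [← hf]
    rfl
  rw [h]
  rfl

lemma permK_mul (σ τ : Equiv.Perm (Fin 3)) (z : Kk 2) :
    permK 2 (σ * τ) z = permK 2 σ (permK 2 τ z) := by
  induction z using TensorProduct.induction_on with
  | zero => simp
  | tmul a w => simp only [permK_tmul, permAq_mul, pE_mul]
  | add x y hx hy => simp only [map_add, hx, hy]

/-- Two transpositions generate `S₃`. -/
lemma permK_fixed {z : Kk 2} (hs : permK 2 sw z = z) (hu : permK 2 uw z = z)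
    (σ : Equiv.Perm (Fin 3)) : permK 2 σ z = z := by
  have h : ∀ σ : Equiv.Perm (Fin 3), σ = sw * sw ∨ σ = sw ∨ σ = uw ∨ σ = sw * uw ∨
      σ = uw * sw ∨ σ = sw * (uw * sw) := by decide
  rcases h σ with rfl | rfl | rfl | rfl | rfl | rfl <;> simp only [permK_mul, hs, hu]

lemma negAq_mkA (p : P3) : negAq (mkA p) = mkA (negP p) := rfl

/-- The central element `a³` acts on bidegree `(2d, q)` by the sign `(-1)^(d+q)`. -/
lemma negK_component {d q : ℕ} {z : Kk 2} (hz : z ∈ component 2 (2 * d) q) :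
    negK 2 z = (-1 : ℚ) ^ (d + q) • z := by
  induction hz using Submodule.span_induction with
  | mem x hx =>
    obtain ⟨a, b, c, l, hd, hq, rfl⟩ := hx
    have h1 : negAq (mkA (X 0 ^ a * X 1 ^ b * X 2 ^ c)) =
        (-1 : ℚ) ^ d • mkA (X 0 ^ a * X 1 ^ b * X 2 ^ c) := by
      obtain rfl : d = a + b + c := by omega
      rw [negAq_mkA, ← map_smul]
      congr 1
      simp only [map_mul, map_pow, negP, aeval_X, smul_eq_C_mul, map_neg, map_one]
      rw [neg_pow (X 0 : P3), neg_pow (X 1 : P3), neg_pow (X 2 : P3)]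
      ring
    have h2 : extHom (-LinearMap.id) (l.map fun pr => eGen 2 pr.1 pr.2).prod =
        (-1 : ℚ) ^ q • (l.map fun pr => eGen 2 pr.1 pr.2).prod := by
      subst hq
      clear hd h1
      induction l with
      | nil => simp
      | cons pr l ih =>
        have hg : extHom (-LinearMap.id) (eGen 2 pr.1 pr.2) = -eGen 2 pr.1 pr.2 := by
          simp [extHom, eGen]
        rw [List.map_cons, List.prod_cons, map_mul, ih, hg, List.length_cons, pow_succ]
        simp
    rw [negK, Algebra.TensorProduct.map_tmul, h1, h2, TensorProduct.smul_tmul_smul, pow_add]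
  | zero => simp
  | add x y _ _ hx hy => rw [map_add, hx, hy, smul_add]
  | smul c x _ hx => rw [map_smul, hx, smul_comm]

lemma inv_of_odd {d q : ℕ} (h : ¬ Even (d + q)) :
    component 2 (2 * d) q ⊓ invD6Submodule 2 = ⊥ := by
  rw [eq_bot_iff]
  rintro z ⟨hz, -, hn⟩
  rw [negK_component hz, (Nat.not_even_iff_odd.mp h).neg_one_pow] at hn
  have h2 : (2 : ℚ) • z = 0 := by linear_combination (norm := module) -hn
  exact (smul_eq_zero.mp h2).resolve_left (by norm_num)

lemma mem_inv {d q : ℕ} (h : Even (d + q)) {z : Kk 2} :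
    z ∈ component 2 (2 * d) q ⊓ invD6Submodule 2 ↔
      z ∈ component 2 (2 * d) q ∧ permK 2 sw z = z ∧ permK 2 uw z = z := by
  constructor
  · rintro ⟨hz, hp, -⟩
    exact ⟨hz, hp sw, hp uw⟩
  · rintro ⟨hz, hs, hu⟩
    refine ⟨hz, permK_fixed hs hu, ?_⟩
    rw [negK_component hz, h.neg_one_pow, one_smul]

lemma component_odd (d q : ℕ) : component 2 (2 * d + 1) q = ⊥ := by
  rw [eq_bot_iff]
  refine Submodule.span_le.mpr ?_
  rintro _ ⟨a, b, c, l, h, -⟩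
  omega

lemma component_eq (d q : ℕ) : component 2 (2 * d) q =
    Submodule.map₂ (TensorProduct.mk ℚ Aq (Em 2)) (Ad d) (G q) := by
  rw [Ad, G, Submodule.map₂_span_span, component]
  congr 1
  ext z
  constructor
  · rintro ⟨a, b, c, l, hd, hq, rfl⟩
    exact ⟨_, ⟨a, b, c, by omega, rfl⟩, _, ⟨l, hq, rfl⟩, rfl⟩
  · rintro ⟨_, ⟨a, b, c, hd, rfl⟩, _, ⟨l, hq, rfl⟩, rfl⟩
    exact ⟨a, b, c, l, by omega, hq, rfl⟩

lemma tmul_mem {d q : ℕ} {e : Aq} {w : Em 2} (he : e ∈ Ad d) (hw : w ∈ G q) :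
    e ⊗ₜ[ℚ] w ∈ component 2 (2 * d) q := by
  rw [component_eq]
  exact Submodule.apply_mem_map₂ _ he hw

lemma exists_of_pair {d q : ℕ} {e₀ e₁ : Aq} (hA : Ad d ≤ Submodule.span ℚ {e₀, e₁}) {z : Kk 2}
    (hz : z ∈ component 2 (2 * d) q) :
    ∃ w₀ ∈ G q, ∃ w₁ ∈ G q, z = e₀ ⊗ₜ[ℚ] w₀ + e₁ ⊗ₜ[ℚ] w₁ := by
  induction hz using Submodule.span_induction with
  | mem x hx =>
    obtain ⟨a, b, c, l, hd, hq, rfl⟩ := hx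
    obtain ⟨r, s, hrs⟩ := Submodule.mem_span_pair.mp
      (hA (Submodule.subset_span ⟨a, b, c, by omega, rfl⟩))
    have hw : (l.map fun pr => eGen 2 pr.1 pr.2).prod ∈ G q :=
      Submodule.subset_span ⟨l, hq, rfl⟩
    refine ⟨r • _, Submodule.smul_mem _ _ hw, s • _, Submodule.smul_mem _ _ hw, ?_⟩
    rw [← hrs, TensorProduct.add_tmul, TensorProduct.smul_tmul, TensorProduct.smul_tmul]
  | zero => exact ⟨0, zero_mem _, 0, zero_mem _, by simp⟩
  | smul c x _ hx =>
    obtain ⟨a, ha, b, hb, rfl⟩ := hx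
    refine ⟨c • a, Submodule.smul_mem _ _ ha, c • b, Submodule.smul_mem _ _ hb, ?_⟩
    simp only [TensorProduct.tmul_smul, smul_add]
  | add x y _ _ hx hy =>
    obtain ⟨a, ha, b, hb, rfl⟩ := hx
    obtain ⟨a', ha', b', hb', rfl⟩ := hy
    refine ⟨a + a', add_mem ha ha', b + b', add_mem hb hb', ?_⟩
    simp only [TensorProduct.tmul_add]
    abel

lemma exists_of_single {d q : ℕ} {e : Aq} (hA : Ad d ≤ Submodule.span ℚ {e}) {z : Kk 2}
    (hz : z ∈ component 2 (2 * d) q) : ∃ w ∈ G q, z = e ⊗ₜ[ℚ] w := by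
  obtain ⟨w₀, h₀, w₁, h₁, rfl⟩ := exists_of_pair (e₀ := e) (e₁ := e) (by simpa using hA) hz
  exact ⟨w₀ + w₁, add_mem h₀ h₁, by rw [TensorProduct.tmul_add]⟩

lemma component_of_Ad {d : ℕ} (h : Ad d = ⊥) (q : ℕ) : component 2 (2 * d) q = ⊥ := by
  rw [component_eq, h, Submodule.map₂_bot_left]

/-- Contraction of the first tensor factor with a functional `φ` on `A`. -/
def contr (φ : Aq →ₗ[ℚ] ℚ) : Kk 2 →ₗ[ℚ] Em 2 :=
  (TensorProduct.lid ℚ (Em 2)).toLinearMap ∘ₗ φ.rTensor (Em 2)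

lemma contr_tmul (φ : Aq →ₗ[ℚ] ℚ) (a : Aq) (w : Em 2) : contr φ (a ⊗ₜ w) = φ a • w := by
  simp [contr]

/-- If `A_d` is the line through `e`, on which the transpositions act by the sign `ε`, then the
invariants in bidegree `(2d, q)` are the `e ⊗ w` with `w` in the `ε`-isotypic part of `E(2)_q`. -/
lemma finrank_single {d q : ℕ} (h : Even (d + q)) {e : Aq} (he : e ∈ Ad d)
    (hA : Ad d ≤ Submodule.span ℚ {e}) {ε : ℚ} (hε : ε * ε = 1) (hs : permAq sw e = ε • e)
    (hu : permAq uw e = ε • e) {φ : Aq →ₗ[ℚ] ℚ} (hφ : φ e = 1) :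
    Module.finrank ℚ ↥(component 2 (2 * d) q ⊓ invD6Submodule 2) =
      Module.finrank ℚ (TS ε q) := by
  let f : Em 2 →ₗ[ℚ] Kk 2 := TensorProduct.mk ℚ Aq (Em 2) e
  have hf : ∀ w, f w = e ⊗ₜ[ℚ] w := fun w => rfl
  have hc : ∀ w, contr φ (f w) = w := fun w => by rw [hf, contr_tmul, hφ, one_smul]
  have hinj : Function.Injective f := Function.LeftInverse.injective hc
  have key : ∀ w w', f w = f w' ↔ w = w' := fun w w' => hinj.eq_iff
  -- multiplication by `ε` turns `ε • σ w = w` into `σ w = ε • w`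
  have hmul : ∀ w w' : Em 2, ε • w = w' ↔ w = ε • w' := by
    intro w w'
    constructor
    · rintro rfl
      rw [smul_smul, hε, one_smul]
    · rintro rfl
      rw [smul_smul, hε, one_smul]
  have hmap : component 2 (2 * d) q ⊓ invD6Submodule 2 = (TS ε q).map f := by
    ext z
    rw [mem_inv h]
    constructor
    · rintro ⟨hz, h1, h2⟩
      obtain ⟨w, hw, rfl⟩ := exists_of_single hA hz
      refine ⟨w, mem_TS.mpr ⟨hw, ?_, ?_⟩, rfl⟩
      · rw [permK_tmul, hs, TensorProduct.smul_tmul] at h1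
        exact (hmul _ _).mp ((key _ _).mp h1)
      · rw [permK_tmul, hu, TensorProduct.smul_tmul] at h2
        exact (hmul _ _).mp ((key _ _).mp h2)
    · rintro ⟨w, hw, rfl⟩
      obtain ⟨hG, h1, h2⟩ := mem_TS.mp hw
      refine ⟨tmul_mem he hG, ?_, ?_⟩
      · rw [hf, permK_tmul, hs, TensorProduct.smul_tmul, (hmul _ _).mpr h1]
      · rw [hf, permK_tmul, hu, TensorProduct.smul_tmul, (hmul _ _).mpr h2]
  rw [hmap]
  exact (Submodule.equivMapOfInjective f hinj (TS ε q)).finrank_eq.symm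

/-- If `A_d` is a copy of the standard representation, with basis `e₀, e₁` permuted like `x, y`,
then the invariants in bidegree `(2d, q)` correspond to the maps from this representation to
`E(2)_q`, which are determined by the coefficient of `e₀`. -/
lemma finrank_pair {d q : ℕ} (h : Even (d + q)) {e₀ e₁ : Aq} (he₀ : e₀ ∈ Ad d) (he₁ : e₁ ∈ Ad d)
    (hA : Ad d ≤ Submodule.span ℚ {e₀, e₁}) (hs₀ : permAq sw e₀ = e₁) (hs₁ : permAq sw e₁ = e₀)
    (hu₀ : permAq uw e₀ = e₀) (hu₁ : permAq uw e₁ = -e₀ - e₁) {φ₀ φ₁ : Aq →ₗ[ℚ] ℚ}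
    (h₀₀ : φ₀ e₀ = 1) (h₀₁ : φ₀ e₁ = 0) (h₁₀ : φ₁ e₀ = 0) (h₁₁ : φ₁ e₁ = 1) :
    Module.finrank ℚ ↥(component 2 (2 * d) q ⊓ invD6Submodule 2) =
      Module.finrank ℚ (TV q) := by
  let f : Em 2 →ₗ[ℚ] Kk 2 := TensorProduct.mk ℚ Aq (Em 2) e₀ +
    TensorProduct.mk ℚ Aq (Em 2) e₁ ∘ₗ (pE sw).toLinearMap
  have hf : ∀ w, f w = e₀ ⊗ₜ[ℚ] w + e₁ ⊗ₜ[ℚ] pE sw w := fun w => rfl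
  have hinj : Function.Injective f := by
    refine Function.LeftInverse.injective (g := contr φ₀) fun w => ?_
    rw [hf, map_add, contr_tmul, contr_tmul, h₀₀, h₀₁, one_smul, zero_smul, add_zero]
  have key : ∀ a b a' b' : Em 2, e₀ ⊗ₜ[ℚ] a + e₁ ⊗ₜ[ℚ] b = e₀ ⊗ₜ[ℚ] a' + e₁ ⊗ₜ[ℚ] b' →
      a = a' ∧ b = b' := by
    intro a b a' b' hab
    constructor
    · simpa [contr_tmul, h₀₀, h₀₁] using congrArg (contr φ₀) hab
    · simpa [contr_tmul, h₁₀, h₁₁] using congrArg (contr φ₁) hab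
  have hS : ∀ a b : Em 2, permK 2 sw (e₀ ⊗ₜ[ℚ] a + e₁ ⊗ₜ[ℚ] b) =
      e₀ ⊗ₜ[ℚ] pE sw b + e₁ ⊗ₜ[ℚ] pE sw a := by
    intro a b
    rw [map_add, permK_tmul, permK_tmul, hs₀, hs₁, add_comm]
  have hU : ∀ a b : Em 2, permK 2 uw (e₀ ⊗ₜ[ℚ] a + e₁ ⊗ₜ[ℚ] b) =
      e₀ ⊗ₜ[ℚ] (pE uw a - pE uw b) + e₁ ⊗ₜ[ℚ] (-pE uw b) := by
    intro a b
    rw [map_add, permK_tmul, permK_tmul, hu₀, hu₁]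
    simp only [TensorProduct.sub_tmul, TensorProduct.neg_tmul, TensorProduct.tmul_sub,
      TensorProduct.tmul_neg]
    abel
  have hss : ∀ w : Em 2, pE sw (pE sw w) = w := by
    intro w
    rw [← pE_mul, show sw * sw = 1 by decide, pE_one]
  have hmap : component 2 (2 * d) q ⊓ invD6Submodule 2 = (TV q).map f := by
    ext z
    rw [mem_inv h]
    constructor
    · rintro ⟨hz, h1, h2⟩
      obtain ⟨w₀, hw₀, w₁, hw₁, rfl⟩ := exists_of_pair hA hz
      rw [hS] at h1
      rw [hU] at h2
      obtain ⟨-, rfl⟩ := key _ _ _ _ h1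
      obtain ⟨h3, h4⟩ := key _ _ _ _ h2
      refine ⟨w₀, mem_TV.mpr ⟨hw₀, ?_, ?_⟩, rfl⟩
      · linear_combination (norm := module) -h4
      · linear_combination (norm := module) h3 - h4
    · rintro ⟨w, hw, rfl⟩
      obtain ⟨hG, h1, h2⟩ := mem_TV.mp hw
      have h3 : -pE uw (pE sw w) = pE sw w := by linear_combination (norm := module) -h1
      refine ⟨add_mem (tmul_mem he₀ hG) (tmul_mem he₁ (pE_mem_G _ hG)), ?_, ?_⟩
      · rw [hf, hS, hss]
      · rw [hf, hU, h3, sub_eq_add_neg, h3, h2]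
  rw [hmap]
  exact (Submodule.equivMapOfInjective f hinj (TV q)).finrank_eq.symm

/-! ### The bigraded components -/

/-- The case of a degree `n + 1 < 6` in which the powers `x^(n+1), y^(n+1), w^(n+1)` sum to zero,
and hence span a copy of the standard representation; `y^(n+1)` is expanded in the basis
`x^(n+1), x^n y`. -/
lemma finrank_powers {n q : ℕ} (hn : n + 1 < 6) (h : Even (n + 1 + q)) {r s : ℚ} (hs : s ≠ 0)
    (hy : yA ^ (n + 1) = r • xA ^ (n + 1) + s • (xA ^ n * yA))
    (hw : (-xA - yA) ^ (n + 1) = -xA ^ (n + 1) - yA ^ (n + 1)) :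
    Module.finrank ℚ ↥(component 2 (2 * (n + 1)) q ⊓ invD6Submodule 2) =
      Module.finrank ℚ (TV q) := by
  obtain ⟨φ, hφ, hφ'⟩ := exists_kre hn
  obtain ⟨ψ, hψ, hψ'⟩ := exists_kim (n := n) (by omega)
  have hA : Ad (n + 1) ≤ Submodule.span ℚ {xA ^ (n + 1), yA ^ (n + 1)} := by
    have h1 : xA ^ (n + 1) ∈ Submodule.span ℚ {xA ^ (n + 1), yA ^ (n + 1)} :=
      Submodule.subset_span (by simp)
    have h2 : yA ^ (n + 1) ∈ Submodule.span ℚ {xA ^ (n + 1), yA ^ (n + 1)} :=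
      Submodule.subset_span (by simp)
    refine (Ad_le n).trans (Submodule.span_le.mpr ?_)
    rintro _ (rfl | rfl)
    · exact h1
    · have : xA ^ n * yA = s⁻¹ • (yA ^ (n + 1) - r • xA ^ (n + 1)) := by
        rw [hy, add_sub_cancel_left, smul_smul, inv_mul_cancel₀ hs, one_smul]
      rw [this]
      exact Submodule.smul_mem _ _ (sub_mem h2 (Submodule.smul_mem _ _ h1))
  refine finrank_pair h (by simpa using xy_mem_Ad (n + 1) 0) (by simpa using xy_mem_Ad 0 (n + 1))
    hA ?_ ?_ ?_ ?_ (φ₀ := φ - (r / s) • ψ) (φ₁ := s⁻¹ • ψ) ?_ ?_ ?_ ?_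
  · rw [map_pow, sxA]
  · rw [map_pow, syA]
  · rw [map_pow, uxA]
  · rw [map_pow, uyA, hw]
  · simp [hφ, hψ]
  · simp [hy, hφ, hψ, hφ', hψ', hs]
  · simp [hψ]
  · simp [hy, hψ, hψ', hs]

lemma finrank_one {q : ℕ} (h : Even (1 + q)) :
    Module.finrank ℚ ↥(component 2 (2 * 1) q ⊓ invD6Submodule 2) = Module.finrank ℚ (TV q) :=
  finrank_powers (n := 0) (r := 0) (s := 1) (by norm_num) h (by norm_num) (by simp) (by ring)

lemma finrank_two {q : ℕ} (h : Even (2 + q)) :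
    Module.finrank ℚ ↥(component 2 (2 * 2) q ⊓ invD6Submodule 2) = Module.finrank ℚ (TV q) :=
  finrank_powers (n := 1) (r := -1) (s := -1) (by norm_num) h (by norm_num)
    (by simp only [neg_smul, one_smul]; linear_combination yA_sq)
    (by linear_combination 2 * yA_sq)

lemma finrank_four {q : ℕ} (h : Even (4 + q)) :
    Module.finrank ℚ ↥(component 2 (2 * 4) q ⊓ invD6Submodule 2) = Module.finrank ℚ (TV q) :=
  finrank_powers (n := 3) (r := 0) (s := 1) (by norm_num) h (by norm_num)
    (by simp only [zero_smul, one_smul]; linear_combination yA * yA_cube)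
    (by linear_combination (2 * yA ^ 2 + 2 * xA * yA + 2 * xA ^ 2) * yA_sq)

lemma finrank_five {q : ℕ} (h : Even (5 + q)) :
    Module.finrank ℚ ↥(component 2 (2 * 5) q ⊓ invD6Submodule 2) = Module.finrank ℚ (TV q) :=
  finrank_powers (n := 4) (r := -1) (s := -1) (by norm_num) h (by norm_num)
    (by simp only [neg_smul, one_smul]; linear_combination yA ^ 2 * yA_cube + xA ^ 3 * yA_sq)
    (by linear_combination (-5 * xA * yA * (xA + yA)) * yA_sq)

lemma finrank_zero {q : ℕ} (h : Even (0 + q)) :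
    Module.finrank ℚ ↥(component 2 (2 * 0) q ⊓ invD6Submodule 2) =
      Module.finrank ℚ (TS 1 q) := by
  obtain ⟨φ, hφ, -⟩ := exists_kre (n := 0) (by norm_num)
  exact finrank_single h (by simpa using xy_mem_Ad 0 0) Ad_zero_le (by norm_num) (by simp)
    (by simp) (by simpa using hφ 0)

/-- In top degree `A_6` is spanned by the Jacobian determinant of the three relations, so `S₃` acts by the sign character. -/
lemma finrank_six {q : ℕ} (h : Even (6 + q)) :
    Module.finrank ℚ ↥(component 2 (2 * 6) q ⊓ invD6Submodule 2) =
      Module.finrank ℚ (TS (-1) q) := by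
  obtain ⟨φ, -, hφ⟩ := exists_kim (n := 5) (by norm_num)
  refine finrank_single h (by simpa using xy_mem_Ad 5 1) Ad_six_le (by norm_num) ?_ ?_
    (by simpa using hφ 5)
  · rw [map_mul, map_pow, sxA, syA, neg_smul, one_smul]
    linear_combination (xA * yA ^ 2) * yA_cube + xA ^ 4 * yA_sq - xA_six
  · rw [map_mul, map_pow, uxA, uyA, neg_smul, one_smul]
    linear_combination -xA_six

/-- `A_3` is the sum of the trivial and the sign representation, spanned by `x³` and
`x²y - xy² = 2x²y + x³`; neither occurs in `E(2)` in odd degree. -/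
lemma inv_three {q : ℕ} (h : Even (3 + q)) (h₁ : TS 1 q = ⊥) (h₂ : TS (-1) q = ⊥) :
    component 2 (2 * 3) q ⊓ invD6Submodule 2 = ⊥ := by
  obtain ⟨φ, hφ, hφ'⟩ := exists_kre (n := 3) (by norm_num)
  obtain ⟨ψ, hψ, hψ'⟩ := exists_kim (n := 2) (by norm_num)
  obtain ⟨e, he⟩ : ∃ e : Aq, e = (2 : ℚ) • (xA ^ 2 * yA) + xA ^ 3 := ⟨_, rfl⟩
  have hA : Ad 3 ≤ Submodule.span ℚ {xA ^ 3, e} := by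
    have h1 : xA ^ 3 ∈ Submodule.span ℚ {xA ^ 3, e} := Submodule.subset_span (by simp)
    have h2 : e ∈ Submodule.span ℚ {xA ^ 3, e} := Submodule.subset_span (by simp)
    refine (Ad_le 2).trans (Submodule.span_le.mpr ?_)
    rintro _ (rfl | rfl)
    · exact h1
    · have : xA ^ 2 * yA = (2⁻¹ : ℚ) • (e - xA ^ 3) := by
        rw [he]
        module
      rw [this]
      exact Submodule.smul_mem _ _ (sub_mem h2 h1)
  have hs₀ : permAq sw (xA ^ 3) = xA ^ 3 := by rw [map_pow, sxA, yA_cube]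
  have hu₀ : permAq uw (xA ^ 3) = xA ^ 3 := by rw [map_pow, uxA]
  have hs₁ : permAq sw e = -e := by
    rw [he, map_add, hs₀, map_smul, map_mul, map_pow, sxA, syA]
    simp only [two_smul]
    linear_combination 2 * xA * yA_sq
  have hu₁ : permAq uw e = -e := by
    rw [he, map_add, hu₀, map_smul, map_mul, map_pow, uxA, uyA]
    simp only [two_smul]
    ring
  have key : ∀ a b a' b' : Em 2, (xA ^ 3) ⊗ₜ[ℚ] a + e ⊗ₜ[ℚ] b = (xA ^ 3) ⊗ₜ[ℚ] a' + e ⊗ₜ[ℚ] b' →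
      a = a' ∧ b = b' := by
    intro a b a' b' hab
    constructor
    · simpa [contr_tmul, he, hφ, hφ', hψ, hψ'] using congrArg (contr (φ - (2⁻¹ : ℚ) • ψ)) hab
    · simpa [contr_tmul, he, hψ, hψ'] using congrArg (contr ψ) hab
  rw [eq_bot_iff]
  intro z hz
  obtain ⟨hc, hs, hu⟩ := (mem_inv h).mp hz
  obtain ⟨w₀, hw₀, w₁, hw₁, rfl⟩ := exists_of_pair hA hc
  rw [map_add, permK_tmul, permK_tmul, hs₀, hs₁, TensorProduct.neg_tmul,
    ← TensorProduct.tmul_neg] at hs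
  rw [map_add, permK_tmul, permK_tmul, hu₀, hu₁, TensorProduct.neg_tmul,
    ← TensorProduct.tmul_neg] at hu
  obtain ⟨hs0, hs1⟩ := key _ _ _ _ hs
  obtain ⟨hu0, hu1⟩ := key _ _ _ _ hu
  have m₀ : w₀ ∈ TS 1 q := mem_TS.mpr ⟨hw₀, by rwa [one_smul], by rwa [one_smul]⟩
  have m₁ : w₁ ∈ TS (-1) q := mem_TS.mpr
    ⟨hw₁, by rw [neg_smul, one_smul, ← neg_eq_iff_eq_neg, hs1],
      by rw [neg_smul, one_smul, ← neg_eq_iff_eq_neg, hu1]⟩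
  rw [h₁, Submodule.mem_bot] at m₀
  rw [h₂, Submodule.mem_bot] at m₁
  simp [m₀, m₁]

lemma finrank_three (q : ℕ) :
    Module.finrank ℚ ↥(component 2 (2 * 3) q ⊓ invD6Submodule 2) = 0 := by
  by_cases h : Even (3 + q)
  · have hq : q = 1 ∨ q = 3 ∨ ∃ k, q = k + 5 := by
      rcases q with _ | _ | _ | _ | _ | q
      · exact absurd h (by decide)
      · simp
      · exact absurd h (by decide)
      · simp
      · exact absurd h (by decide)
      · exact Or.inr (Or.inr ⟨q, rfl⟩)
    rw [inv_three h, finrank_bot]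
    · rcases hq with rfl | rfl | ⟨k, rfl⟩
      · exact TS_one 1 (by simp)
      · exact TS_three 1 (by simp)
      · exact TS_big 1 k
    · rcases hq with rfl | rfl | ⟨k, rfl⟩
      · exact TS_one (-1) (by simp)
      · exact TS_three (-1) (by simp)
      · exact TS_big (-1) k
  · rw [inv_of_odd h, finrank_bot]

lemma finrank_big (d q : ℕ) :
    Module.finrank ℚ ↥(component 2 (2 * (d + 7)) q ⊓ invD6Submodule 2) = 0 := by
  rw [component_of_Ad (Ad_big d), bot_inf_eq, finrank_bot]

lemma finrank_even (d q : ℕ) :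
    Module.finrank ℚ ↥(component 2 (2 * d) q ⊓ invD6Submodule 2) =
      if ¬ Even (d + q) then 0
      else if d = 0 then Module.finrank ℚ (TS 1 q)
      else if d = 3 then 0
      else if d = 6 then Module.finrank ℚ (TS (-1) q)
      else if d < 7 then Module.finrank ℚ (TV q)
      else 0 := by
  by_cases h : Even (d + q)
  · rw [if_neg (not_not.mpr h)]
    split_ifs with h0 h3 h6 h7
    · subst h0
      exact finrank_zero h
    · subst h3
      exact finrank_three q
    · subst h6
      exact finrank_six h
    · obtain rfl | rfl | rfl | rfl : d = 1 ∨ d = 2 ∨ d = 4 ∨ d = 5 := by omega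
      · exact finrank_one h
      · exact finrank_two h
      · exact finrank_four h
      · exact finrank_five h
    · obtain ⟨k, rfl⟩ : ∃ k, d = k + 7 := ⟨d - 7, by omega⟩
      exact finrank_big k q
  · rw [if_pos h, inv_of_odd h, finrank_bot]

/-- Multiplicity of the trivial character in `E(2)_q`. -/
lemma finrank_TS_one (q : ℕ) :
    Module.finrank ℚ (TS 1 q) = if q = 0 ∨ q = 2 ∨ q = 4 then 1 else 0 := by
  rcases q with _ | _ | _ | _ | _ | q
  · exact TS_one_zero
  · rw [zero_add, TS_one 1 (Or.inl rfl), finrank_bot, if_neg (by omega)]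
  · exact TS_one_two
  · rw [TS_three 1 (Or.inl rfl), finrank_bot, if_neg (by omega)]
  · exact TS_one_four
  · rw [TS_big 1 q, finrank_bot, if_neg (by omega)]

/-- Multiplicity of the sign character in `E(2)_q`. -/
lemma finrank_TS_neg (q : ℕ) : Module.finrank ℚ (TS (-1) q) = if q = 2 then 3 else 0 := by
  rcases q with _ | _ | _ | _ | _ | q
  · rw [TS_neg_zero, finrank_bot, if_neg (by omega)]
  · rw [zero_add, TS_one (-1) (Or.inr rfl), finrank_bot, if_neg (by omega)]
  · exact TS_neg_two
  · rw [TS_three (-1) (Or.inr rfl), finrank_bot, if_neg (by omega)]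
  · rw [TS_neg_four, finrank_bot, if_neg (by omega)]
  · rw [TS_big (-1) q, finrank_bot, if_neg (by omega)]

/-- Multiplicity of the standard representation in `E(2)_q`. -/
lemma finrank_TV (q : ℕ) : Module.finrank ℚ (TV q) =
    if q = 1 ∨ q = 3 then 2 else if q = 2 then 1 else 0 := by
  rcases q with _ | _ | _ | _ | _ | q
  · rw [TV_zero, finrank_bot, if_neg (by omega), if_neg (by omega)]
  · exact TV_one
  · exact TV_two
  · exact TV_three
  · rw [TV_four, finrank_bot, if_neg (by omega), if_neg (by omega)]
  · rw [TV_big q, finrank_bot, if_neg (by omega), if_neg (by omega)]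

/-- The invariant subalgebra `K(2)^{D₆}` has Hilbert–Poincaré series
`t⁴ + 2s¹⁰t³ + 2s²t³ + 3s¹²t² + s⁸t² + s⁴t² + t² + 2s¹⁰t + 2s²t + 1`: its bigraded
components have dimensions `(0,0):1`, `(2,1):2`, `(10,1):2`, `(0,2):1`, `(4,2):1`,
`(8,2):1`, `(12,2):3`, `(2,3):2`, `(10,3):2`, `(0,4):1`, and all others are zero. -/
theorem hilbert_series_K2_invariants (p q : ℕ) :
    Module.finrank ℚ ↥(component 2 p q ⊓ invD6Submodule 2) =
      if (p, q) = (0, 0) then 1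
      else if (p, q) = (2, 1) then 2
      else if (p, q) = (10, 1) then 2
      else if (p, q) = (0, 2) then 1
      else if (p, q) = (4, 2) then 1
      else if (p, q) = (8, 2) then 1
      else if (p, q) = (12, 2) then 3
      else if (p, q) = (2, 3) then 2
      else if (p, q) = (10, 3) then 2
      else if (p, q) = (0, 4) then 1
      else 0 := by
  obtain ⟨d, rfl | rfl⟩ := p.even_or_odd'
  · rw [finrank_even, finrank_TS_one, finrank_TS_neg, finrank_TV]
    simp only [Prod.mk.injEq, Nat.even_iff]
    by_cases hd : d < 7
    · by_cases hq : q < 5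
      · interval_cases d <;> interval_cases q <;> rfl
      · simp only [show q ≠ 0 by omega, show q ≠ 1 by omega, show q ≠ 2 by omega,
          show q ≠ 3 by omega, show q ≠ 4 by omega, and_false, or_self, if_false, ite_self]
    · simp only [show d ≠ 0 by omega, show d ≠ 3 by omega, show d ≠ 6 by omega,
        show 2 * d ≠ 0 by omega, show 2 * d ≠ 2 by omega, show 2 * d ≠ 10 by omega,
        show 2 * d ≠ 4 by omega, show 2 * d ≠ 8 by omega, show 2 * d ≠ 12 by omega, hd,
        false_and, if_false, ite_self]
  · rw [component_odd, bot_inf_eq, finrank_bot]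
    simp only [Prod.mk.injEq, show 2 * d + 1 ≠ 0 by omega, show 2 * d + 1 ≠ 2 by omega,
      show 2 * d + 1 ≠ 10 by omega, show 2 * d + 1 ≠ 4 by omega, show 2 * d + 1 ≠ 8 by omega,
      show 2 * d + 1 ≠ 12 by omega, false_and, if_false]

end
end

section
/- The images of the three elements z(2,{1})·z(1,{2,3}), z(2,{2})·z(1,{1,3}), z(2,{3})·z(1,{1,2}) in the quotient vector space K(3)/F₂K(3) are linearly independent over ℚ, and every element of the bidegree-(2,3) component of the invariant subalgebra K(3)^{D₆} is congruent modulo F₂K(3) to a ℚ-linear combination of these three elements. -/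
/-!
Let `V` be the standard two-dimensional representation of `S₃`, spanned by three vectors with zero
sum. The part of `K(3)` of bidegree `(2,3)` in which each exterior factor contributes exactly one
generator is `V ⊗ V ⊗ V ⊗ V` (the first factor being the degree-one part of `A`), and the remaining
monomials of bidegree `(2,3)` use at most two indices, so they lie in `F₂K(3)`
(`tmul_word_mem_Fsub`). Up to sign, the three elements `gens18` are the three contraction tensors
`∑ e_i e_i e_k e_k`, `∑ e_i e_k e_i e_k`, `∑ e_i e_k e_k e_i` (`gens18_zero`, `gens18_one`,
`gens18_two`).

*Spanning.* An invariant element is its own average over `S₃`, so it suffices that the average of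
each spanning monomial is a combination of the contraction tensors modulo `F₂K(3)`. For basis
tensors of `V^{⊗4}` this is the explicit formula `sum_perm6_eq`, extended by linearity in each slot
in `sum_perm6_mem`. The element `a³` acts trivially in bidegree `(2,3)`, so the `S₃`-average is
enough.

*Independence.* For `v₀, v₁, v₂, v₃` orthogonal to `(1,1,1)`, the functional
`v₀ ⊗ v₁ ⊗ v₂ ⊗ v₃` on `V^{⊗4}` extends to a functional `coefK` on `K(3)` vanishing on `F₂K(3)`:
on `A` it is the `ε`-coefficient of a homomorphism to the dual numbers, and on the exterior algebra
it is a determinant in degree three and zero in the other degrees. Its values on the contraction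
tensors are the products of scalar products `⟨v₀,v₁⟩⟨v₂,v₃⟩` and so on; taking each `v_k` to be one
of the orthogonal vectors `(1,-1,0)`, `(1,1,-2)` isolates one generator at a time.
-/

set_option synthInstance.maxHeartbeats 1000000
set_option maxHeartbeats 1000000

open MvPolynomial
open scoped TensorProduct

noncomputable section

/-- The filtration submodule `F_n K(m)`: the ℚ-linear span of the elements
`x^a y^b w^c α_I β_J γ_K` with `|I ∪ J ∪ K| ≤ n`. -/
def Fsub (m n : ℕ) : Submodule ℚ (Kk m) :=
  Submodule.span ℚ {z : Kk m | ∃ (a b c : ℕ) (I J K : Finset (Fin m)),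
    (I ∪ J ∪ K).card ≤ n ∧
    z = mkA (X 0 ^ a * X 1 ^ b * X 2 ^ c) ⊗ₜ[ℚ]
          (prodGen m 0 I * prodGen m 1 J * prodGen m 2 K)}
/-- The three elements `z(2,{1})·z(1,{2,3})`, `z(2,{2})·z(1,{1,3})`, `z(2,{3})·z(1,{1,2})`
of `K(3)` (indices shifted: the paper's `{1,2,3}` is `{0,1,2}` here). -/
def gens18 : Fin 3 → Kk 3 :=
  ![zS 3 2 {0} * zS 3 1 {1, 2}, zS 3 2 {1} * zS 3 1 {0, 2}, zS 3 2 {2} * zS 3 1 {0, 1}]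

/-! ### Averaging four-fold tensors over `S₃` -/

/-- The six permutations of the three indices, listed explicitly so that a sum over them can be
expanded term by term. -/
def perm6 : Fin 6 → Equiv.Perm (Fin 3) :=
  ![1, Equiv.swap 0 1, Equiv.swap 0 2, Equiv.swap 1 2,
    Equiv.swap 0 1 * Equiv.swap 1 2, Equiv.swap 1 2 * Equiv.swap 0 1]

/-- The `S₃`-invariant form `⟨e_i, e_j⟩ = δ_ij - 1/3` on the standard representation. -/
def stdPairing (i j : Fin 3) : ℚ := if i = j then 2 / 3 else -1 / 3

/-- The symmetrization formula on basis tensors. The coefficients come from projecting onto the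
span of the three contractions, whose Gram matrix has diagonal entries `4` and off-diagonal
entries `2`. -/
lemma sum_perm6_eq {N : Type*} [AddCommGroup N] [Module ℚ N]
    (M : Fin 3 → Fin 3 → Fin 3 → Fin 3 → N)
    (h1 : ∀ b c d, ∑ i, M i b c d = 0) (h2 : ∀ a c d, ∑ i, M a i c d = 0)
    (h3 : ∀ a b d, ∑ i, M a b i d = 0) (h4 : ∀ a b c, ∑ i, M a b c i = 0) (a b c d : Fin 3)
    (ha : a = 0 ∨ a = 1) (hb : b = 0 ∨ b = 1) (hc : c = 0 ∨ c = 1) (hd : d = 0 ∨ d = 1) :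
    ∑ t, M (perm6 t a) (perm6 t b) (perm6 t c) (perm6 t d) =
      (9/4*(stdPairing a b * stdPairing c d) - 3/4*(stdPairing a c * stdPairing b d
        + stdPairing a d * stdPairing b c)) • ∑ i, ∑ k, M i i k k +
      (9/4*(stdPairing a c * stdPairing b d) - 3/4*(stdPairing a b * stdPairing c d
        + stdPairing a d * stdPairing b c)) • ∑ i, ∑ k, M i k i k +
      (9/4*(stdPairing a d * stdPairing b c) - 3/4*(stdPairing a b * stdPairing c d
        + stdPairing a c * stdPairing b d)) • ∑ i, ∑ k, M i k k i := by
  have e : ∀ f : Fin 3 → N, ∑ i, f i = 0 → f 2 = -f 0 - f 1 := fun f hf => by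
    rw [Fin.sum_univ_three] at hf
    rw [← sub_eq_zero, ← hf]; abel
  replace h1 := fun b c d => e (fun i => M i b c d) (h1 b c d)
  replace h2 := fun a c d => e (fun i => M a i c d) (h2 a c d)
  replace h3 := fun a b d => e (fun i => M a b i d) (h3 a b d)
  replace h4 := fun a b c => e (fun i => M a b c i) (h4 a b c)
  have s0 : ∀ i : Fin 3, perm6 0 i = i := by decide
  have s1 : ∀ i : Fin 3, perm6 1 i = ![1,0,2] i := by decide
  have s2 : ∀ i : Fin 3, perm6 2 i = ![2,1,0] i := by decide
  have s3 : ∀ i : Fin 3, perm6 3 i = ![0,2,1] i := by decide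
  have s4 : ∀ i : Fin 3, perm6 4 i = ![1,2,0] i := by decide
  have s5 : ∀ i : Fin 3, perm6 5 i = ![2,0,1] i := by decide
  simp only [Fin.sum_univ_six, Fin.sum_univ_three, s0, s1, s2, s3, s4, s5, h1, h2, h3, h4]
  clear s0 s1 s2 s3 s4 s5
  rcases ha with rfl | rfl <;> rcases hb with rfl | rfl <;> rcases hc with rfl | rfl <;>
    rcases hd with rfl | rfl <;>
  · simp only [Fin.isValue, Matrix.cons_val_zero, Matrix.cons_val_one,
      h1, h2, h3, h4, stdPairing, if_true, if_false, zero_ne_one, one_ne_zero]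
    module

/-- The symmetrization of any basis tensor lies in every subspace containing the three
contractions. By the linear relations in each slot it is enough to treat indices in `{0, 1}`. -/
lemma sum_perm6_mem {N : Type*} [AddCommGroup N] [Module ℚ N]
    (M : Fin 3 → Fin 3 → Fin 3 → Fin 3 → N)
    (h1 : ∀ b c d, ∑ i, M i b c d = 0) (h2 : ∀ a c d, ∑ i, M a i c d = 0)
    (h3 : ∀ a b d, ∑ i, M a b i d = 0) (h4 : ∀ a b c, ∑ i, M a b c i = 0) (S : Submodule ℚ N)
    (m1 : ∑ i, ∑ k, M i i k k ∈ S) (m2 : ∑ i, ∑ k, M i k i k ∈ S)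
    (m3 : ∑ i, ∑ k, M i k k i ∈ S) (a b c d : Fin 3) :
    ∑ t, M (perm6 t a) (perm6 t b) (perm6 t c) (perm6 t d) ∈ S := by
  -- A family of three vectors with zero sum lies in `S` as soon as two of them do.
  have ext : ∀ f : Fin 3 → Fin 6 → N, (∀ t, ∑ i, f i t = 0) →
      (∀ i, i = 0 ∨ i = 1 → ∑ t, f i t ∈ S) → ∀ i, ∑ t, f i t ∈ S := by
    intro f hf h01 i
    have hs : ∑ t, f 0 t + ∑ t, f 1 t + ∑ t, f 2 t = 0 := by
      rw [← Finset.sum_add_distrib, ← Finset.sum_add_distrib]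
      exact Finset.sum_eq_zero fun t _ => by rw [← Fin.sum_univ_three (fun i => f i t), hf t]
    have e2 : ∑ t, f 2 t = -(∑ t, f 0 t + ∑ t, f 1 t) := (neg_eq_of_add_eq_zero_right hs).symm
    fin_cases i
    · exact h01 0 (Or.inl rfl)
    · exact h01 1 (Or.inr rfl)
    · exact e2 ▸ S.neg_mem (S.add_mem (h01 0 (Or.inl rfl)) (h01 1 (Or.inr rfl)))
  refine ext (fun i t => M (perm6 t i) (perm6 t b) (perm6 t c) (perm6 t d))
    (fun t => (Equiv.sum_comp (perm6 t) fun i => M i _ _ _).trans (h1 _ _ _)) (fun a ha => ?_) a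
  refine ext (fun i t => M (perm6 t a) (perm6 t i) (perm6 t c) (perm6 t d))
    (fun t => (Equiv.sum_comp (perm6 t) fun i => M _ i _ _).trans (h2 _ _ _)) (fun b hb => ?_) b
  refine ext (fun i t => M (perm6 t a) (perm6 t b) (perm6 t i) (perm6 t d))
    (fun t => (Equiv.sum_comp (perm6 t) fun i => M _ _ i _).trans (h3 _ _ _)) (fun c hc => ?_) c
  refine ext (fun i t => M (perm6 t a) (perm6 t b) (perm6 t c) (perm6 t i))
    (fun t => (Equiv.sum_comp (perm6 t) fun i => M _ _ _ i).trans (h4 _ _ _)) (fun d hd => ?_) d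
  rw [sum_perm6_eq M h1 h2 h3 h4 a b c d ha hb hc hd]
  exact S.add_mem (S.add_mem (S.smul_mem _ m1) (S.smul_mem _ m2)) (S.smul_mem _ m3)

/-! ### Products of exterior generators and the filtration -/

/-- The product in `E(m)` of the degree-one generators listed by `l`; the pair `(j, i)` stands
for `α_j`, `β_j`, `γ_j` according to `i = 0, 1, 2`. -/
def word (m : ℕ) (l : List (Fin m × Fin 3)) : Em m := (l.map fun pr => eGen m pr.1 pr.2).prod

@[simp] lemma word_nil (m : ℕ) : word m [] = 1 := rfl

@[simp] lemma word_cons (m : ℕ) (p : Fin m × Fin 3) (l : List (Fin m × Fin 3)) :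
    word m (p :: l) = eGen m p.1 p.2 * word m l := by simp [word]

lemma word_append (m : ℕ) (l l' : List (Fin m × Fin 3)) :
    word m (l ++ l') = word m l * word m l' := by simp [word]

lemma eGen_mul_swap {m : ℕ} (j k : Fin m) (a b : Fin 3) :
    eGen m j a * eGen m k b = -(eGen m k b * eGen m j a) :=
  eq_neg_of_add_eq_zero_left (ExteriorAlgebra.ι_add_mul_swap _ _)

/-- Reordering a product of degree-one generators changes it at most by a sign. -/
lemma word_perm {m : ℕ} {l l' : List (Fin m × Fin 3)} (h : l.Perm l') :
    word m l = word m l' ∨ word m l = -word m l' := by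
  induction h with
  | nil => exact Or.inl rfl
  | cons x _ ih => rcases ih with ih | ih <;> simp [ih]
  | swap x y l =>
    right
    simp only [word_cons, ← mul_assoc]
    rw [eGen_mul_swap, neg_mul]
  | trans _ _ ih1 ih2 =>
    rcases ih1 with h1 | h1 <;> rcases ih2 with h2 | h2 <;> simp [h1, h2]

lemma word_eq_zero {m : ℕ} {l : List (Fin m × Fin 3)} (h : ¬ l.Nodup) : word m l = 0 := by
  obtain ⟨x, hx⟩ := List.exists_duplicate_iff_not_nodup.mpr h
  rw [List.duplicate_iff_sublist] at hx
  obtain ⟨r, hr⟩ := hx.exists_perm_append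
  have h0 : word m ([x, x] ++ r) = 0 := by
    rw [word_append]
    simp only [word_cons, word_nil, mul_one, eGen, ExteriorAlgebra.ι_sq_zero, zero_mul]
  rcases word_perm hr with h' | h' <;> rw [h', h0]
  exact neg_zero

/-- The list of generators whose product, in order, is `α_I β_J γ_K`. -/
def triList {m : ℕ} (I J K : Finset (Fin m)) : List (Fin m × Fin 3) :=
  (I.sort (· ≤ ·)).map (fun j => (j, 0)) ++ (J.sort (· ≤ ·)).map (fun j => (j, 1)) ++
    (K.sort (· ≤ ·)).map (fun j => (j, 2))

lemma word_triList {m : ℕ} (I J K : Finset (Fin m)) :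
    word m (triList I J K) = prodGen m 0 I * prodGen m 1 J * prodGen m 2 K := by
  simp [triList, word, prodGen, Function.comp_def, mul_assoc]

lemma mem_triList {m : ℕ} (I J K : Finset (Fin m)) (p : Fin m × Fin 3) :
    p ∈ triList I J K ↔ (p.2 = 0 ∧ p.1 ∈ I) ∨ (p.2 = 1 ∧ p.1 ∈ J) ∨ (p.2 = 2 ∧ p.1 ∈ K) := by
  obtain ⟨j, i⟩ := p
  simp only [triList, List.mem_append, List.mem_map, Finset.mem_sort, Prod.mk.injEq]
  constructor
  · rintro ((⟨_, h, rfl, rfl⟩ | ⟨_, h, rfl, rfl⟩) | ⟨_, h, rfl, rfl⟩) <;> simp [h]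
  · rintro (⟨h, h'⟩ | ⟨h, h'⟩ | ⟨h, h'⟩) <;> simp_all

lemma nodup_triList {m : ℕ} (I J K : Finset (Fin m)) : (triList I J K).Nodup := by
  have hm : ∀ (S : Finset (Fin m)) (i : Fin 3),
      ((S.sort (· ≤ ·)).map (fun j => (j, i))).Nodup := fun S i =>
    (Finset.sort_nodup S (· ≤ ·)).map fun a b h => (Prod.mk.inj h).1
  refine List.Nodup.append (List.Nodup.append (hm _ _) (hm _ _) ?_) (hm _ _) ?_
  · intro p; simp only [List.mem_map]; rintro ⟨_, _, rfl⟩ ⟨_, _, h⟩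
    simp at h
  · intro p; simp only [List.mem_append, List.mem_map]
    rintro (⟨_, _, rfl⟩ | ⟨_, _, rfl⟩) ⟨_, _, h⟩ <;> simp at h

lemma indices_triList {m : ℕ} (I J K : Finset (Fin m)) :
    ((triList I J K).map Prod.fst).toFinset = I ∪ J ∪ K := by
  ext j
  simp only [List.mem_toFinset, List.mem_map, mem_triList, Finset.mem_union]
  constructor
  · rintro ⟨p, (⟨-, h⟩ | ⟨-, h⟩ | ⟨-, h⟩), rfl⟩ <;> simp [h]
  · rintro ((h | h) | h)
    · exact ⟨(j, 0), by simp [h], rfl⟩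
    · exact ⟨(j, 1), by simp [h], rfl⟩
    · exact ⟨(j, 2), by simp [h], rfl⟩

/-- Products of generators in any order, and not only the ordered ones `α_I β_J γ_K`, lie in
the filtration step given by the number of indices that occur. -/
lemma tmul_word_mem_Fsub {m n : ℕ} (a b c : ℕ) {l : List (Fin m × Fin 3)}
    (hl : (l.map Prod.fst).toFinset.card ≤ n) :
    mkA (X 0 ^ a * X 1 ^ b * X 2 ^ c) ⊗ₜ[ℚ] word m l ∈ Fsub m n := by
  by_cases hn : l.Nodup
  · let S : Fin 3 → Finset (Fin m) := fun i => {j | (j, i) ∈ l}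
    have hp : l.Perm (triList (S 0) (S 1) (S 2)) := by
      rw [List.perm_ext_iff_of_nodup hn (nodup_triList _ _ _)]
      rintro ⟨j, i⟩
      rw [mem_triList]
      fin_cases i <;> simp [S]
    have hmem : mkA (X 0 ^ a * X 1 ^ b * X 2 ^ c) ⊗ₜ[ℚ] word m (triList (S 0) (S 1) (S 2))
        ∈ Fsub m n := by
      refine Submodule.subset_span ⟨a, b, c, _, _, _, ?_, by rw [word_triList]⟩
      rw [← indices_triList, ← List.toFinset_eq_of_perm _ _ (hp.map _)]
      exact hl
    rcases word_perm hp with h | h <;> rw [h]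
    · exact hmem
    · rw [TensorProduct.tmul_neg]; exact neg_mem hmem
  · rw [word_eq_zero hn, TensorProduct.tmul_zero]; exact zero_mem _

lemma permK_tmul_word {m : ℕ} (σ : Equiv.Perm (Fin 3)) (p : P3) (l : List (Fin m × Fin 3)) :
    permK m σ (mkA p ⊗ₜ[ℚ] word m l) =
      mkA (rename σ p) ⊗ₜ[ℚ] word m (l.map fun q => (q.1, σ q.2)) := by
  have hE : ∀ j i, extHom (LinearMap.compLeft (permV σ) (Fin m)) (eGen m j i) =
      eGen m j (σ i) := by
    intro j i
    simp only [extHom, eGen, ExteriorAlgebra.lift_ι_apply, LinearMap.comp_apply]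
    congr 1
    ext1 k
    rw [LinearMap.compLeft_apply, Function.comp_apply, ← permV_vGen]
    by_cases h : k = j
    · subst h; simp
    · simp [h]
  rw [permK, Algebra.TensorProduct.map_tmul]
  congr 1
  rw [word, map_list_prod, word, List.map_map, List.map_map]
  congr 1
  exact List.map_congr_left fun q _ => hE _ _

lemma sum_mkA_X : ∑ i, mkA (X i) = 0 := by
  rw [← map_sum, Fin.sum_univ_three, mkA, Ideal.Quotient.mkₐ_eq_mk]
  exact Ideal.Quotient.eq_zero_iff_mem.mpr (Ideal.subset_span (Or.inl rfl))

lemma sum_eGen (m : ℕ) (j : Fin m) : ∑ i, eGen m j i = 0 := by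
  have hv : ∑ i, vGen i = 0 := by
    simp only [vGen, ← Submodule.mkQ_apply]
    rw [← map_sum, Submodule.mkQ_apply, Submodule.Quotient.mk_eq_zero]
    refine Submodule.subset_span ?_
    ext k
    simp
  have h := congrArg (ExteriorAlgebra.ι ℚ) (congrArg (LinearMap.single ℚ (fun _ => Vq) j) hv)
  simpa [eGen] using h

/-! ### The three generators as contractions -/

/-- The tensor `x_a ⊗ e_{1,b} e_{2,c} e_{3,d}`, where `(x_0, x_1, x_2) = (x, y, w)` and
`e_{j,i}` is `α_j`, `β_j`, `γ_j` for `i = 0, 1, 2`. -/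
def multiTensor (a b c d : Fin 3) : Kk 3 := mkA (X a) ⊗ₜ[ℚ] word 3 [(0, b), (1, c), (2, d)]

lemma prodGen_singleton (i j : Fin 3) : prodGen 3 i {j} = eGen 3 j i := by
  simp [prodGen]

lemma prodGen_pair (i : Fin 3) {j k : Fin 3} (h : j < k) :
    prodGen 3 i {j, k} = eGen 3 j i * eGen 3 k i := by
  rw [prodGen, Finset.sort_insert (r := (· ≤ ·)) (by simpa using h.le) (by simpa using h.ne)]
  simp

lemma tmul_sum_mul {A E : Type*} [CommRing A] [Algebra ℚ A] [Ring E] [Algebra ℚ E]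
    (a : Fin 3 → A) (u v : Fin 3 → E) :
    (a 0 ⊗ₜ[ℚ] u 0 + a 1 ⊗ₜ[ℚ] u 1 + a 2 ⊗ₜ[ℚ] u 2) *
      ((1 : A) ⊗ₜ[ℚ] v 0 + 1 ⊗ₜ[ℚ] v 1 + 1 ⊗ₜ[ℚ] v 2) =
    ∑ i, ∑ k, a i ⊗ₜ[ℚ] (u i * v k) := by
  simp [Fin.sum_univ_three, add_mul, mul_add, Algebra.TensorProduct.tmul_mul_tmul]
  abel

lemma zS_mul_zS (j k l : Fin 3) (h : k < l) : zS 3 2 {j} * zS 3 1 {k, l} =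
    ∑ i, ∑ t, mkA (X i) ⊗ₜ[ℚ] (eGen 3 j i * (eGen 3 k t * eGen 3 l t)) := by
  rw [zS, zS, zz, zz]
  simp only [prodGen_singleton, prodGen_pair _ h, Nat.reduceSub, pow_one, pow_zero, map_one]
  exact tmul_sum_mul (fun i => mkA (X i)) (fun i => eGen 3 j i) fun t => eGen 3 k t * eGen 3 l t

lemma gens18_zero : gens18 0 = ∑ i, ∑ k, multiTensor i i k k := by
  refine (zS_mul_zS 0 1 2 (by decide)).trans ?_
  simp only [multiTensor, word_cons, word_nil, mul_one]

lemma gens18_one : gens18 1 = -∑ i, ∑ k, multiTensor i k i k := by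
  have e : ∀ a b c, eGen 3 1 a * (eGen 3 0 b * eGen 3 2 c) =
      -(eGen 3 0 b * (eGen 3 1 a * eGen 3 2 c)) := fun a b c => by
    rw [← mul_assoc, eGen_mul_swap, neg_mul, mul_assoc]
  refine (zS_mul_zS 1 0 2 (by decide)).trans ?_
  simp only [multiTensor, word_cons, word_nil, mul_one, e, TensorProduct.tmul_neg,
    Finset.sum_neg_distrib]

lemma gens18_two : gens18 2 = ∑ i, ∑ k, multiTensor i k k i := by
  have e : ∀ a b c, eGen 3 2 a * (eGen 3 0 b * eGen 3 1 c) =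
      eGen 3 0 b * (eGen 3 1 c * eGen 3 2 a) := fun a b c => by
    rw [← mul_assoc, eGen_mul_swap, neg_mul, mul_assoc, eGen_mul_swap 2 1, mul_neg, neg_neg]
  refine (zS_mul_zS 2 0 1 (by decide)).trans ?_
  simp only [multiTensor, word_cons, word_nil, mul_one, e]

/-! ### Symmetrization lands in the span of the generators -/

/-- The span of the three generators together with `F₂K(3)`. -/
def genSpan : Submodule ℚ (Kk 3) := Submodule.span ℚ (Set.range gens18) ⊔ Fsub 3 2

lemma gens18_mem (i : Fin 3) : gens18 i ∈ genSpan :=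
  Submodule.mem_sup_left (Submodule.subset_span ⟨i, rfl⟩)

lemma sum_multiTensor_mem (a b c d : Fin 3) :
    ∑ t, multiTensor (perm6 t a) (perm6 t b) (perm6 t c) (perm6 t d) ∈ genSpan := by
  refine sum_perm6_mem multiTensor (fun b c d => ?_) (fun a c d => ?_) (fun a b d => ?_)
    (fun a b c => ?_) genSpan ?_ ?_ ?_ a b c d
  · simp only [multiTensor]
    rw [← TensorProduct.sum_tmul, sum_mkA_X, TensorProduct.zero_tmul]
  · simp only [multiTensor, word_cons]
    rw [← TensorProduct.tmul_sum, ← Finset.sum_mul, sum_eGen, zero_mul, TensorProduct.tmul_zero]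
  · simp only [multiTensor, word_cons]
    rw [← TensorProduct.tmul_sum, ← Finset.mul_sum, ← Finset.sum_mul, sum_eGen, zero_mul,
      mul_zero, TensorProduct.tmul_zero]
  · simp only [multiTensor, word_cons]
    rw [← TensorProduct.tmul_sum, ← Finset.mul_sum, ← Finset.mul_sum, ← Finset.sum_mul, sum_eGen,
      zero_mul, mul_zero, mul_zero, TensorProduct.tmul_zero]
  · exact gens18_zero ▸ gens18_mem 0
  · exact neg_neg (∑ i, ∑ k, multiTensor i k i k) ▸ neg_mem (gens18_one ▸ gens18_mem 1)
  · exact gens18_two ▸ gens18_mem 2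

lemma exists_perm_of_card {l : List (Fin 3 × Fin 3)} (hl : l.length = 3)
    (hc : 2 < (l.map Prod.fst).toFinset.card) :
    ∃ b c d, l.Perm [(0, b), (1, c), (2, d)] := by
  have hu : (l.map Prod.fst).toFinset = Finset.univ :=
    Finset.eq_univ_of_card _ (le_antisymm (Finset.card_le_univ _) (by rw [Fintype.card_fin]; exact hc))
  have hex : ∀ j : Fin 3, ∃ i, (j, i) ∈ l := fun j => by
    have : j ∈ (l.map Prod.fst).toFinset := hu ▸ Finset.mem_univ j
    simpa using this
  obtain ⟨b, hb⟩ := hex 0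
  obtain ⟨c, hc⟩ := hex 1
  obtain ⟨d, hd⟩ := hex 2
  refine ⟨b, c, d, ((List.Nodup.subperm ?_ ?_).perm_of_length_le ?_).symm⟩
  · simp
  · simp [hb, hc, hd]
  · simp [hl]

/-- On a spanning monomial of bidegree `(2,3)`: either an exterior index is repeated and the whole
orbit lies in `F₂K(3)`, or the monomial is, up to sign, one of the tensors `multiTensor`. -/
lemma sum_permK_mem {z : Kk 3} (hz : z ∈ component 3 2 3) :
    ∑ t, permK 3 (perm6 t) z ∈ genSpan := by
  have hlin : ∀ y, (∑ t, (permK 3 (perm6 t)).toLinearMap) y = ∑ t, permK 3 (perm6 t) y :=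
    fun y => by simp [LinearMap.sum_apply]
  suffices h : component 3 2 3 ≤ genSpan.comap (∑ t, (permK 3 (perm6 t)).toLinearMap) by
    have := h hz
    rwa [Submodule.mem_comap, hlin] at this
  refine Submodule.span_le.mpr ?_
  rintro _ ⟨a, b, c, l, habc, hl, rfl⟩
  change _ ∈ genSpan
  rw [hlin]
  change ∑ t, permK 3 (perm6 t) (_ ⊗ₜ[ℚ] word 3 l) ∈ genSpan
  have hX : ∃ i, (X 0 ^ a * X 1 ^ b * X 2 ^ c : P3) = X i := by
    have : (a = 1 ∧ b = 0 ∧ c = 0) ∨ (a = 0 ∧ b = 1 ∧ c = 0) ∨ (a = 0 ∧ b = 0 ∧ c = 1) := by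
      omega
    rcases this with ⟨rfl, rfl, rfl⟩ | ⟨rfl, rfl, rfl⟩ | ⟨rfl, rfl, rfl⟩
    exacts [⟨0, by simp⟩, ⟨1, by simp⟩, ⟨2, by simp⟩]
  obtain ⟨i, hi⟩ := hX
  rw [hi]
  by_cases hcard : (l.map Prod.fst).toFinset.card ≤ 2
  · refine sum_mem fun t _ => Submodule.mem_sup_right ?_
    rw [permK_tmul_word, rename_X]
    have hX' : ∀ k : Fin 3, ∃ a b c : ℕ, (X k : P3) = X 0 ^ a * X 1 ^ b * X 2 ^ c := fun k => by
      fin_cases k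
      exacts [⟨1, 0, 0, by simp⟩, ⟨0, 1, 0, by simp⟩, ⟨0, 0, 1, by simp⟩]
    obtain ⟨a', b', c', h'⟩ := hX' (perm6 t i)
    rw [h']
    refine tmul_word_mem_Fsub _ _ _ ?_
    rwa [List.map_map]
  · obtain ⟨b', c', d', hp⟩ := exists_perm_of_card hl (not_le.mp hcard)
    have key : ∑ t, permK 3 (perm6 t) (multiTensor i b' c' d') ∈ genSpan := by
      have := sum_multiTensor_mem i b' c' d'
      simpa only [multiTensor, permK_tmul_word, rename_X, List.map_cons, List.map_nil] using this
    rcases word_perm hp with h | h <;> rw [h]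
    · exact key
    · simp only [TensorProduct.tmul_neg, map_neg, Finset.sum_neg_distrib]
      exact neg_mem key

/-- An invariant element equals its own average over `S₃`, so the symmetrization of the component
describes all of its invariants. -/
lemma exists_coeffs {z : Kk 3} (hz : z ∈ component 3 2 3) (hi : z ∈ invD6Submodule 3) :
    ∃ c : Fin 3 → ℚ, z - ∑ i, c i • gens18 i ∈ Fsub 3 2 := by
  have hz6 : ∑ t, permK 3 (perm6 t) z = (6 : ℚ) • z := by
    rw [Finset.sum_congr rfl fun t _ => hi.1 (perm6 t)]
    simp [Nat.cast_smul_eq_nsmul ℚ 6 z |>.symm]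
  have hmem : z ∈ genSpan := by
    have := genSpan.smul_mem (6⁻¹ : ℚ) (hz6 ▸ sum_permK_mem hz)
    rwa [smul_smul, inv_mul_cancel₀ (by norm_num), one_smul] at this
  obtain ⟨y, hy, f, hf, rfl⟩ := Submodule.mem_sup.mp hmem
  obtain ⟨c, rfl⟩ := (Submodule.mem_span_range_iff_exists_fun ℚ).mp hy
  exact ⟨c, by simpa using hf⟩

/-! ### Functionals separating the generators modulo `F₂` -/

/-- For `v` with coordinate sum zero, the functional on `ℚ³/ℚ(1,1,1)` sending the class of the
`i`-th basis vector to `v i`. -/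
def dotV (v : Fin 3 → ℚ) (hv : ∑ i, v i = 0) : Vq →ₗ[ℚ] ℚ :=
  Vsub.liftQ (Fintype.linearCombination ℚ v) (by
    rw [Vsub, Submodule.span_le]
    rintro _ rfl
    simpa [Fintype.linearCombination_apply] using hv)

lemma dotV_vGen (v : Fin 3 → ℚ) (hv : ∑ i, v i = 0) (i : Fin 3) : dotV v hv (vGen i) = v i := by
  simp [dotV, vGen, Submodule.liftQ_apply, Fintype.linearCombination_apply, Pi.single_apply]

/-- For `v` with coordinate sum zero, the functional on `A` sending `x, y, w` to the coordinates
of `v`: the `ε`-coefficient of the homomorphism to the dual numbers `x_i ↦ v_i ε`. -/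
def coefA (v : Fin 3 → ℚ) (hv : ∑ i, v i = 0) : Aq →ₗ[ℚ] ℚ :=
  TrivSqZeroExt.sndHom ℚ ℚ ∘ₗ (Ideal.Quotient.liftₐ Jid
    (aeval fun i => (TrivSqZeroExt.inr (v i) : TrivSqZeroExt ℚ ℚ)) (fun p hp => by
      have hle : Jid ≤ RingHom.ker (aeval fun i =>
          (TrivSqZeroExt.inr (v i) : TrivSqZeroExt ℚ ℚ) : P3 →ₐ[ℚ] TrivSqZeroExt ℚ ℚ) := by
        have h2 : ∀ i, (TrivSqZeroExt.inr (v i) : TrivSqZeroExt ℚ ℚ) ^ 2 = 0 := fun i => by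
          rw [pow_two, TrivSqZeroExt.inr_mul_inr]
        rw [Jid, Ideal.span_le]
        rintro q (rfl | rfl | rfl)
        · rw [Fin.sum_univ_three] at hv
          simp only [SetLike.mem_coe, RingHom.mem_ker, map_add, aeval_X,
            ← TrivSqZeroExt.inr_add, hv, TrivSqZeroExt.inr_zero]
        · simp only [SetLike.mem_coe, RingHom.mem_ker, map_add, map_pow, aeval_X, h2, add_zero]
        · have h6 : ∀ i, (TrivSqZeroExt.inr (v i) : TrivSqZeroExt ℚ ℚ) ^ 6 = 0 := fun i => by
            rw [show 6 = 2 * 3 from rfl, pow_mul, h2, zero_pow three_ne_zero]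
          simp only [SetLike.mem_coe, RingHom.mem_ker, map_add, map_pow, aeval_X, h6, add_zero]
      exact hle hp)).toLinearMap

lemma coefA_X (v : Fin 3 → ℚ) (hv : ∑ i, v i = 0) (i : Fin 3) : coefA v hv (mkA (X i)) = v i := by
  change TrivSqZeroExt.snd
    (aeval (fun i => (TrivSqZeroExt.inr (v i) : TrivSqZeroExt ℚ ℚ)) (X i : P3)) = v i
  rw [aeval_X, TrivSqZeroExt.snd_inr]

/-- The linear functional on `E(3)` that vanishes outside degree three and sends a product
`v₁ v₂ v₃` of degree-one elements to the determinant with entries `f j` applied to the `j`-th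
component of `v_i`. -/
def coefE (f : Fin 3 → Vq →ₗ[ℚ] ℚ) : Em 3 →ₗ[ℚ] ℚ :=
  ExteriorAlgebra.liftAlternating (Pi.single 3 (Matrix.detRowAlternating.compLinearMap
    (LinearMap.pi fun j => f j ∘ₗ LinearMap.proj j)))

lemma coefE_word3 (f : Fin 3 → Vq →ₗ[ℚ] ℚ) (p q r : Fin 3 × Fin 3) :
    coefE f (word 3 [p, q, r]) = Matrix.det (Matrix.of fun i j =>
      f j ((Pi.single (![p, q, r] i).1 (vGen (![p, q, r] i).2) : Fin 3 → Vq) j)) := by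
  have h : word 3 [p, q, r] = ExteriorAlgebra.ιMulti ℚ 3 fun i =>
      (Pi.single (![p, q, r] i).1 (vGen (![p, q, r] i).2) : Fin 3 → Vq) := by
    rw [ExteriorAlgebra.ιMulti_apply]
    rfl
  rw [h, coefE, ExteriorAlgebra.liftAlternating_apply_ιMulti, Pi.single_eq_same]
  rfl

lemma coefE_word_of_length_ne (f : Fin 3 → Vq →ₗ[ℚ] ℚ) {l : List (Fin 3 × Fin 3)}
    (hl : l.length ≠ 3) : coefE f (word 3 l) = 0 := by
  have h : word 3 l = ExteriorAlgebra.ιMulti ℚ l.length fun i =>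
      (Pi.single (l.get i).1 (vGen (l.get i).2) : Fin 3 → Vq) := by
    rw [ExteriorAlgebra.ιMulti_apply, word]
    congr 1
    conv_lhs => rw [← List.ofFn_get l, List.map_ofFn]
    rfl
  rw [h, coefE, ExteriorAlgebra.liftAlternating_apply_ιMulti, Pi.single_eq_of_ne hl]
  rfl

lemma coefE_word_of_card (f : Fin 3 → Vq →ₗ[ℚ] ℚ) {l : List (Fin 3 × Fin 3)}
    (hl : (l.map Prod.fst).toFinset.card ≤ 2) : coefE f (word 3 l) = 0 := by
  by_cases h3 : l.length = 3
  · obtain ⟨p, q, r, rfl⟩ := List.length_eq_three.mp h3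
    have : ∃ j, j ∉ ([p, q, r].map Prod.fst).toFinset := by
      by_contra! h
      rw [Finset.eq_univ_iff_forall.mpr h] at hl
      simp at hl
    obtain ⟨j, hj⟩ := this
    simp only [List.map_cons, List.map_nil, List.mem_toFinset, List.mem_cons, List.not_mem_nil,
      or_false, not_or] at hj
    rw [coefE_word3]
    -- The index `j` does not occur, so the `j`-th column is zero.
    refine Matrix.det_eq_zero_of_column_eq_zero j fun i => ?_
    fin_cases i <;> simp [hj]
  · exact coefE_word_of_length_ne f h3

/-- The functional on `K(3)` given by `v k` on the `k`-th tensor slot: it reads off the part of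
bidegree `(2, 3)` that is multilinear in the three exterior factors. -/
def coefK (v : Fin 4 → Fin 3 → ℚ) (hv : ∀ k, ∑ i, v k i = 0) : Kk 3 →ₗ[ℚ] ℚ :=
  LinearMap.mul' ℚ ℚ ∘ₗ TensorProduct.map (coefA (v 0) (hv 0))
    (coefE fun j => dotV (v j.succ) (hv j.succ))

lemma coefK_multiTensor (v : Fin 4 → Fin 3 → ℚ) (hv : ∀ k, ∑ i, v k i = 0) (a b c d : Fin 3) :
    coefK v hv (multiTensor a b c d) = v 0 a * (v 1 b * v 2 c * v 3 d) := by
  rw [coefK, multiTensor, LinearMap.comp_apply, TensorProduct.map_tmul, LinearMap.mul'_apply,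
    coefA_X, coefE_word3]
  congr 1
  simp [Matrix.det_fin_three, dotV_vGen]

lemma coefK_of_mem_Fsub (v : Fin 4 → Fin 3 → ℚ) (hv : ∀ k, ∑ i, v k i = 0) {z : Kk 3}
    (hz : z ∈ Fsub 3 2) : coefK v hv z = 0 := by
  suffices h : Fsub 3 2 ≤ LinearMap.ker (coefK v hv) from h hz
  refine Submodule.span_le.mpr ?_
  rintro _ ⟨a, b, c, I, J, K, hcard, rfl⟩
  rw [← indices_triList] at hcard
  change coefK v hv _ = 0
  rw [← word_triList, coefK, LinearMap.comp_apply, TensorProduct.map_tmul,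
    coefE_word_of_card _ hcard, TensorProduct.tmul_zero, map_zero]

lemma linearIndependent_gens18 : LinearIndependent ℚ
    (fun i => (Submodule.Quotient.mk (gens18 i) : Kk 3 ⧸ Fsub 3 2)) := by
  rw [Fintype.linearIndependent_iff]
  intro c hc
  have hmem : ∑ i, c i • gens18 i ∈ Fsub 3 2 := by
    rw [← Submodule.Quotient.mk_eq_zero, ← hc]
    simp only [← Submodule.mkQ_apply, map_sum, map_smul]
  have h0 := fun v hv => coefK_of_mem_Fsub v hv hmem
  simp only [Fin.sum_univ_three, map_add, map_smul, gens18_zero, gens18_one, gens18_two, map_neg,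
    coefK_multiTensor, smul_eq_mul] at h0
  -- Since `(1,-1,0)` and `(1,1,-2)` are orthogonal, putting one of them in a pair of slots and
  -- the other in the complementary pair isolates one coefficient.
  have e0 := h0 ![![1, -1, 0], ![1, -1, 0], ![1, 1, -2], ![1, 1, -2]]
    (by intro k; fin_cases k <;> simp <;> norm_num)
  have e1 := h0 ![![1, -1, 0], ![1, 1, -2], ![1, -1, 0], ![1, 1, -2]]
    (by intro k; fin_cases k <;> simp <;> norm_num)
  have e2 := h0 ![![1, -1, 0], ![1, 1, -2], ![1, 1, -2], ![1, -1, 0]]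
    (by intro k; fin_cases k <;> simp <;> norm_num)
  simp at e0 e1 e2
  norm_num at e0 e1 e2
  intro i
  fin_cases i
  exacts [e0, e1, e2]

/-- The images of `z(2,{1})·z(1,{2,3})`, `z(2,{2})·z(1,{1,3})`,
`z(2,{3})·z(1,{1,2})` in `K(3)/F₂K(3)` are linearly independent over ℚ, and every element
of the bidegree-`(2,3)` component of the invariant subalgebra `K(3)^{D₆}` is congruent
modulo `F₂K(3)` to a ℚ-linear combination of these three elements. -/
theorem basis_mod_F2_bidegree_2_3 :
    LinearIndependent ℚ
      (fun i => (Submodule.Quotient.mk (gens18 i) : Kk 3 ⧸ Fsub 3 2)) ∧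
    ∀ z ∈ component 3 2 3 ⊓ invD6Submodule 3,
      ∃ c : Fin 3 → ℚ, z - ∑ i, c i • gens18 i ∈ Fsub 3 2 := by
  exact ⟨linearIndependent_gens18, fun _ hz => exists_coeffs hz.1 hz.2⟩

end
end
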